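/- arXiv:math/9811004 — 3 statements merged into one kernel-verified Lean document; each statement's English description precedes it below -/
import Mathlib

section
/- Let P be a finite p-group with p > f(P) + 1. Then the nilpotency class of P is at most f(P) + 1. -/
/-!
If `P` has class less than `p` and its derived subgroup has exponent dividing `p ^ k`, then
`g ↦ g ^ p ^ k` is multiplicative: `n ↦ a ^ n * b ^ n * ((a * b) ^ n)⁻¹` is a polynomial sequence in
the sense of Leibman vanishing at `0` and `1`, so it is a product of sequences `n ↦ h ^ n.choose i`
with `2 ≤ i` and `h` in the `i`-th term of the lower central series, and these vanish at `n = p ^ k`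
because `p ^ k` divides `(p ^ k).choose i` for `0 < i < p`.

The class bound is proved by induction on the order together with the assertion that, when `P` has
coexponent `f`, the term `γ` of the lower central series that should be the last possibly nontrivial
one lies in every cyclic subgroup `⟨x⟩` of maximal order. For a central subgroup `L` of order `p`
inside `⟨x⟩` this inclusion lifts from `P ⧸ L`. If `L` meets `⟨x⟩` trivially, then `P ⧸ L` has
smaller coexponent, and multiplicativity of the power maps shows that either `γ` is trivial or the
subgroup of order `p` of `⟨x⟩` is itself central and can replace `L`. Finally, if `P` is not cyclic
it has a normal elementary abelian subgroup `U` of order `p ^ 2`; since `P ⧸ U` has coexponent less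
than `f`, `γ` lies in `U` as well as in the cyclic group `⟨x⟩`, so it has order at most `p` and is
central.
-/

open Subgroup
open scoped commutatorElement

universe u

section ThreeSubgroups

variable {G : Type*} [Group G]

theorem commutator_commutator_le_of_rotate {H₁ H₂ H₃ N : Subgroup G} [N.Normal]
    (h₁ : ⁅⁅H₂, H₃⁆, H₁⁆ ≤ N) (h₂ : ⁅⁅H₃, H₁⁆, H₂⁆ ≤ N) : ⁅⁅H₁, H₂⁆, H₃⁆ ≤ N := by
  have le_iff (K : Subgroup G) : K ≤ N ↔ K.map (QuotientGroup.mk' N) = ⊥ := by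
    rw [Subgroup.map_eq_bot_iff, QuotientGroup.ker_mk']
  rw [le_iff] at *
  simp only [map_commutator] at *
  exact commutator_commutator_eq_bot_of_rotate h₁ h₂

theorem commutator_top_lowerCentralSeries_le (i j : ℕ) :
    ⁅(⊤ : Subgroup G).lowerCentralSeries i, (⊤ : Subgroup G).lowerCentralSeries j⁆ ≤
      (⊤ : Subgroup G).lowerCentralSeries (i + j + 1) := by
  induction j generalizing i with
  | zero => exact le_rfl
  | succ j ih =>
    rw [commutator_comm, Subgroup.lowerCentralSeries_succ]
    apply commutator_commutator_le_of_rotate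
    · rw [commutator_comm ⊤, ← Subgroup.lowerCentralSeries_succ,
        show i + (j + 1) + 1 = i + 1 + j + 1 by ring]
      exact ih (i + 1)
    · exact commutator_mono (ih i) le_rfl

theorem commutator_lowerCentralSeries_le (S : Subgroup G) (i j : ℕ) :
    ⁅S.lowerCentralSeries i, S.lowerCentralSeries j⁆ ≤ S.lowerCentralSeries (i + j + 1) := by
  rw [← top_subtype_lowerCentralSeries S i, ← top_subtype_lowerCentralSeries S j,
    ← top_subtype_lowerCentralSeries S (i + j + 1), ← map_commutator]
  exact map_mono (commutator_top_lowerCentralSeries_le i j)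

end ThreeSubgroups

/-- A descending `ℕ`-indexed filtration of a group compatible with commutators. The terms need not
be normal and `term 0` need not be the whole group. -/
structure CommutatorFiltration (G : Type*) [Group G] where
  term : ℕ → Subgroup G
  antitone_term : Antitone term
  commutator_term_le : ∀ i j, ⁅term i, term j⁆ ≤ term (i + j)

namespace CommutatorFiltration

variable {G : Type u} [Group G] (A : CommutatorFiltration G)

theorem commutatorElement_mem_term {i j : ℕ} {x y : G} (hx : x ∈ A.term i) (hy : y ∈ A.term j) :
    ⁅x, y⁆ ∈ A.term (i + j) :=
  A.commutator_term_le i j (commutator_mem_commutator hx hy)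

theorem conj_mem_term {i j : ℕ} {x t : G} (hx : x ∈ A.term i) (ht : t ∈ A.term j) :
    t * x * t⁻¹ ∈ A.term i := by
  rw [← MulAut.conj_apply, conj_eq_commutatorElement_mul]
  exact mul_mem (A.antitone_term (Nat.le_add_left i j) (A.commutatorElement_mem_term ht hx)) hx

/-- The pairs `(g, g * a)` with `g ∈ A.term i` and `a ∈ A.term (i + 1)`: the `i`-th term of the
filtration of `G × G` whose sequences are pairs of a sequence and its shift. -/
def pairTerm (i : ℕ) : Subgroup (G × G) where
  carrier := {x | x.1 ∈ A.term i ∧ x.1⁻¹ * x.2 ∈ A.term (i + 1)}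
  one_mem' := by simp [one_mem]
  mul_mem' := by
    rintro ⟨g, g'⟩ ⟨h, h'⟩ ⟨hg, hg'⟩ ⟨hh, hh'⟩
    refine ⟨mul_mem hg hh, ?_⟩
    have : (g * h)⁻¹ * (g' * h') = h⁻¹ * (g⁻¹ * g') * h⁻¹⁻¹ * (h⁻¹ * h') := by group
    exact this ▸ mul_mem (A.conj_mem_term hg' (inv_mem hh)) hh'
  inv_mem' := by
    rintro ⟨g, g'⟩ ⟨hg, hg'⟩
    refine ⟨inv_mem hg, ?_⟩
    have : g⁻¹⁻¹ * g'⁻¹ = g * (g⁻¹ * g')⁻¹ * g⁻¹ := by group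
    exact this ▸ A.conj_mem_term (inv_mem hg') hg

theorem mem_pairTerm {i : ℕ} {g g' : G} :
    (g, g') ∈ A.pairTerm i ↔ g ∈ A.term i ∧ g⁻¹ * g' ∈ A.term (i + 1) :=
  Iff.rfl

theorem commutatorElement_mem_pairTerm {i j : ℕ} {x y : G × G} (hx : x ∈ A.pairTerm i)
    (hy : y ∈ A.pairTerm j) : ⁅x, y⁆ ∈ A.pairTerm (i + j) := by
  obtain ⟨g, g'⟩ := x
  obtain ⟨h, h'⟩ := y
  obtain ⟨hg, ha⟩ := hx
  obtain ⟨hh, hb⟩ := hy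
  set a := g⁻¹ * g' with ha_def
  set b := h⁻¹ * h' with hb_def
  have hgh : ⁅g, h⁆ ∈ A.term (i + j) := A.commutatorElement_mem_term hg hh
  have h_left : ⁅a, h * b⁆ ∈ A.term (i + j + 1) := by
    rw [add_right_comm]
    exact A.commutatorElement_mem_term ha (mul_mem hh (A.antitone_term j.le_succ hb))
  have h_right : ⁅g, b⁆ ∈ A.term (i + j + 1) := by
    rw [add_assoc]
    exact A.commutatorElement_mem_term hg hb
  have h_expand : ⁅g, h⁆⁻¹ * ⁅g', h'⁆ =
      ⁅g, h⁆⁻¹ * (g * ⁅a, h * b⁆ * g⁻¹) * ⁅g, h⁆⁻¹⁻¹ * (h * ⁅g, b⁆ * h⁻¹) := by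
    rw [ha_def, hb_def]
    simp only [commutatorElement_def]
    group
  refine ⟨hgh, ?_⟩
  change ⁅g, h⁆⁻¹ * ⁅g', h'⁆ ∈ _
  rw [h_expand]
  exact mul_mem (A.conj_mem_term (A.conj_mem_term h_left hg) (inv_mem hgh))
    (A.conj_mem_term h_right hh)

/-- The filtration `CommutatorFiltration.pairTerm` of `G × G`. -/
def pair : CommutatorFiltration (G × G) where
  term := A.pairTerm
  antitone_term _ _ hij _ hx :=
    ⟨A.antitone_term hij hx.1, A.antitone_term (Nat.succ_le_succ hij) hx.2⟩
  commutator_term_le _ _ :=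
    commutator_le.2 fun _ hx _ hy => A.commutatorElement_mem_pairTerm hx hy

/-- Pairing a sequence with its shift. -/
def shiftPair (G : Type*) [Group G] : (ℕ → G) →* ℕ → G × G where
  toFun g n := (g n, g (n + 1))
  map_one' := rfl
  map_mul' _ _ := rfl

/-- The sequences whose first `M` discrete derivatives, the `k`-th one being obtained by iterating
`g ↦ fun n => (g n)⁻¹ * g (n + 1)`, take values in `A.term k`. Passing to `A.pair` makes it evident
that they form a group. -/
def polynomialSequencesUpTo : ℕ → ∀ {G : Type u} [Group G], CommutatorFiltration G →
    Subgroup (ℕ → G)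
  | 0, _, _, A => Subgroup.pi Set.univ fun _ => A.term 0
  | M + 1, G, _, A => (polynomialSequencesUpTo M A.pair).comap (shiftPair G)

/-- Leibman's group of polynomial sequences with respect to a filtration. -/
def polynomialSequences : Subgroup (ℕ → G) :=
  ⨅ M, polynomialSequencesUpTo M A

variable {A}

theorem mem_polynomialSequencesUpTo_succ {M : ℕ} {g : ℕ → G} :
    g ∈ polynomialSequencesUpTo (M + 1) A ↔
      (fun n => (g n, g (n + 1))) ∈ polynomialSequencesUpTo M A.pair :=
  Iff.rfl

theorem apply_mem_term_of_forall_lt_eq_one {i : ℕ} {g : ℕ → G}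
    (hg : g ∈ polynomialSequencesUpTo i A) (h_one : ∀ n < i, g n = 1) : g i ∈ A.term i := by
  induction i generalizing G with
  | zero => exact hg 0 trivial
  | succ i ih =>
    have h_pair := ih (mem_polynomialSequencesUpTo_succ.1 hg) fun n hn => by
      rw [h_one n (by lia), h_one (n + 1) (by lia), Prod.mk_one_one]
    simpa [h_one i i.lt_succ_self] using h_pair.2

theorem pow_choose_mem_polynomialSequencesUpTo (M : ℕ) {m : ℕ} {h : G} (hh : h ∈ A.term m) :
    (fun n => h ^ n.choose m) ∈ polynomialSequencesUpTo M A := by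
  induction M generalizing G m with
  | zero => exact fun n _ => pow_mem (A.antitone_term m.zero_le hh) _
  | succ M ih =>
    rw [mem_polynomialSequencesUpTo_succ]
    have h_diag : (h, h) ∈ A.pairTerm m := A.mem_pairTerm.2 ⟨hh, by simp [one_mem]⟩
    cases m with
    | zero => simpa using ih (A := A.pair) h_diag
    | succ m =>
      have h_right : ((1 : G), h) ∈ A.pairTerm m :=
        A.mem_pairTerm.2 ⟨one_mem _, by simpa using hh⟩
      convert mul_mem (ih (A := A.pair) h_right) (ih (A := A.pair) h_diag) using 2 with n
      ext <;> simp [Nat.choose_succ_succ, pow_add]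

theorem pow_choose_mem_polynomialSequences {m : ℕ} {h : G} (hh : h ∈ A.term m) :
    (fun n => h ^ n.choose m) ∈ A.polynomialSequences :=
  mem_iInf.2 fun M => pow_choose_mem_polynomialSequencesUpTo M hh

theorem apply_eq_one_of_forall_pow_choose_eq_one {q : ℕ}
    (hq : ∀ i, 2 ≤ i → ∀ h ∈ A.term i, h ^ q.choose i = 1) {g : ℕ → G}
    (hg : g ∈ A.polynomialSequences) (h_zero : g 0 = 1) (h_one : g 1 = 1) : g q = 1 := by
  have exists_vanishing (i : ℕ) (hi : 2 ≤ i) :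
      ∃ g' ∈ A.polynomialSequences, (∀ n < i, g' n = 1) ∧ g' q = g q := by
    induction i, hi using Nat.le_induction with
    | base => exact ⟨g, hg, fun n hn => by interval_cases n <;> assumption, rfl⟩
    | succ i hi ih =>
      obtain ⟨g', hg', h_vanish, hgq⟩ := ih
      have hgi : g' i ∈ A.term i :=
        apply_mem_term_of_forall_lt_eq_one (mem_iInf.1 hg' i) h_vanish
      refine ⟨_, mul_mem (inv_mem (pow_choose_mem_polynomialSequences hgi)) hg', ?_, ?_⟩
      · intro n hn
        obtain hn | rfl := Nat.lt_succ_iff_lt_or_eq.1 hn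
        · simp [Nat.choose_eq_zero_of_lt hn, h_vanish n hn]
        · simp
      · simp [hq i hi _ hgi, hgq]
  obtain ⟨g', -, h_vanish, hgq⟩ := exists_vanishing (q + 2) (by lia)
  exact hgq ▸ h_vanish q (by lia)

end CommutatorFiltration

section PowerMap

variable {G : Type*} [Group G]

/-- The lower central series of `S`, indexed from `1` as is customary, with `S` also in degree
`0`. -/
def lowerCentralFiltration (S : Subgroup G) : CommutatorFiltration G where
  term i := S.lowerCentralSeries (i - 1)
  antitone_term _ _ hij := S.lowerCentralSeries_antitone (Nat.sub_le_sub_right hij 1)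
  commutator_term_le
    | 0, j => by
      simpa using le_normalizer_iff_commutator_le_right.1
        (S.self_le_normalizer_lowerCentralSeries (j - 1))
    | i, 0 => by
      simpa using le_normalizer_iff_commutator_le_left.1
        (S.self_le_normalizer_lowerCentralSeries (i - 1))
    | i + 1, j + 1 => by
      rw [show i + 1 + (j + 1) - 1 = i + j + 1 by lia]
      exact commutator_lowerCentralSeries_le S i j

theorem mul_pow_of_forall_pow_choose_eq_one {S : Subgroup G} {q : ℕ}
    (hq : ∀ i, 2 ≤ i → ∀ h ∈ S.lowerCentralSeries (i - 1), h ^ q.choose i = 1) {a b : G}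
    (ha : a ∈ S) (hb : b ∈ S) : (a * b) ^ q = a ^ q * b ^ q := by
  have pow_mem_poly {x : G} (hx : x ∈ S) :
      (fun n => x ^ n) ∈ (lowerCentralFiltration S).polynomialSequences := by
    simpa using CommutatorFiltration.pow_choose_mem_polynomialSequences
      (A := lowerCentralFiltration S) (m := 1) hx
  have h_eq_one : a ^ q * b ^ q * ((a * b) ^ q)⁻¹ = 1 :=
    CommutatorFiltration.apply_eq_one_of_forall_pow_choose_eq_one (A := lowerCentralFiltration S)
      hq (mul_mem (mul_mem (pow_mem_poly ha) (pow_mem_poly hb))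
        (inv_mem (pow_mem_poly (mul_mem ha hb)))) (by simp) (by simp)
  exact (mul_inv_eq_one.1 h_eq_one).symm

theorem dvd_choose_of_coprime {n i : ℕ} (h : n.Coprime i) : n ∣ n.choose i := by
  obtain _ | n := n
  · simp [(Nat.coprime_zero_left i).1 h]
  obtain _ | i := i
  · simp_all
  exact h.dvd_of_dvd_mul_right (Nat.add_one_mul_choose_eq n i ▸ dvd_mul_right _ _)

variable {p : ℕ} [Fact p.Prime] {k : ℕ}

theorem mul_pow_prime_pow {S : Subgroup G} (h_class : S.lowerCentralSeries (p - 1) = ⊥)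
    (hk : ∀ h ∈ ⁅S, S⁆, h ^ p ^ k = 1) {a b : G} (ha : a ∈ S) (hb : b ∈ S) :
    (a * b) ^ p ^ k = a ^ p ^ k * b ^ p ^ k := by
  refine mul_pow_of_forall_pow_choose_eq_one (fun i hi h hh => ?_) ha hb
  obtain hip | hpi := lt_or_ge i p
  · have h_coprime : (p ^ k).Coprime i :=
      (Nat.coprime_of_lt_prime (by lia) hip Fact.out).pow_left k
    obtain ⟨m, hm⟩ := dvd_choose_of_coprime h_coprime
    rw [hm, pow_mul, hk h (S.lowerCentralSeries_antitone (show 1 ≤ i - 1 by lia) hh), one_pow]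
  · have hh_bot := S.lowerCentralSeries_antitone (Nat.sub_le_sub_right hpi 1) hh
    rw [h_class, mem_bot] at hh_bot
    rw [hh_bot, one_pow]

theorem commutator_closure_pair_le {H : Subgroup G} [H.Normal] {a b : G} (hab : ⁅a, b⁆ ∈ H) :
    ⁅closure {a, b}, closure {a, b}⁆ ≤ H := by
  have h_comm : Commute (a : G ⧸ H) b := by
    rw [← commutatorElement_eq_one_iff_commute]
    exact (QuotientGroup.eq_one_iff _).2 hab
  rw [← QuotientGroup.ker_mk' H, ← Subgroup.map_eq_bot_iff, map_commutator,
    commutator_self_eq_bot_iff, MonoidHom.map_closure, Set.image_pair]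
  apply isMulCommutative_closure
  rintro _ (rfl | rfl) _ (rfl | rfl)
  exacts [rfl, h_comm, h_comm.symm, rfl]

theorem mul_pow_prime_pow_of_commutatorElement_mem
    (h_class : (⊤ : Subgroup G).lowerCentralSeries (p - 1) = ⊥) {H : Subgroup G} [H.Normal]
    (hk : ∀ h ∈ H, h ^ p ^ k = 1) {a b : G} (hab : ⁅a, b⁆ ∈ H) :
    (a * b) ^ p ^ k = a ^ p ^ k * b ^ p ^ k :=
  mul_pow_prime_pow (S := closure {a, b})
    (eq_bot_mono (lowerCentralSeries_mono _ le_top) h_class)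
    (fun h hh => hk h (commutator_closure_pair_le hab hh))
    (subset_closure (by simp)) (subset_closure (by simp))

theorem mul_pow_prime_of_commutator_le_center (hp : 2 < p) {S : Subgroup G}
    (hS : ⁅S, S⁆ ≤ center G) (h_exp : ∀ h ∈ ⁅S, S⁆, h ^ p = 1) {a b : G} (ha : a ∈ S)
    (hb : b ∈ S) : (a * b) ^ p = a ^ p * b ^ p := by
  have h_class : S.lowerCentralSeries 2 = ⊥ :=
    eq_bot_mono (commutator_mono hS le_top) (commutator_center_left ⊤)
  simpa using mul_pow_prime_pow (k := 1)
    (eq_bot_mono (S.lowerCentralSeries_antitone (show 2 ≤ p - 1 by lia)) h_class)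
    (by simpa using h_exp) ha hb

section BoundedClass

variable (h_class : (⊤ : Subgroup G).lowerCentralSeries (p - 1) = ⊥)

include h_class

theorem commutatorElement_pow_prime_pow {j : ℕ}
    (hj : ∀ h ∈ (⊤ : Subgroup G).lowerCentralSeries (j + 2), h ^ p ^ k = 1) {a : G}
    (ha : a ∈ (⊤ : Subgroup G).lowerCentralSeries j) (b : G) :
    ⁅a, b⁆ ^ p ^ k = ⁅a ^ p ^ k, b⁆ := by
  have h_mem : ⁅⁅a, b⁆, b * a * b⁻¹⁆ ∈ (⊤ : Subgroup G).lowerCentralSeries (j + 2) :=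
    commutator_mem_commutator (commutator_mem_commutator ha (mem_top b)) (mem_top _)
  have h_mul := mul_pow_prime_pow_of_commutatorElement_mem h_class hj h_mem
  rw [show ⁅a, b⁆ * (b * a * b⁻¹) = a by simp [commutatorElement_def, mul_assoc], conj_pow]
    at h_mul
  rw [commutatorElement_def (a ^ p ^ k) b, eq_mul_inv_of_mul_eq h_mul.symm]
  simp [mul_assoc]

theorem pow_eq_one_of_mem_lowerCentralSeries_succ {j : ℕ}
    (hj : ∀ h ∈ (⊤ : Subgroup G).lowerCentralSeries (j + 2), h ^ p ^ k = 1)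
    (h_center : ∀ a ∈ (⊤ : Subgroup G).lowerCentralSeries j, a ^ p ^ k ∈ center G) {a : G}
    (ha : a ∈ (⊤ : Subgroup G).lowerCentralSeries (j + 1)) : a ^ p ^ k = 1 := by
  rw [Subgroup.mem_lowerCentralSeries_succ_iff] at ha
  induction ha using closure_induction with
  | mem x hx =>
    obtain ⟨u, hu, v, -, rfl⟩ := hx
    rw [commutatorElement_pow_prime_pow h_class hj hu, commutatorElement_eq_one_iff_mul_comm]
    exact (mem_center_iff.1 (h_center u hu) v).symm
  | one => exact one_pow _
  | mul x y hx hy hx_pow hy_pow =>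
    rw [mul_pow_prime_pow_of_commutatorElement_mem h_class hj
      (commutator_mem_commutator hx (mem_top y)), hx_pow, hy_pow, one_mul]
  | inv x hx hx_pow => rw [inv_pow, hx_pow, inv_one]

theorem pow_eq_one_of_forall_pow_mem_center {i : ℕ}
    (h_center : ∀ a ∈ (⊤ : Subgroup G).lowerCentralSeries i, a ^ p ^ k ∈ center G) :
    ∀ a ∈ (⊤ : Subgroup G).lowerCentralSeries (i + 1), a ^ p ^ k = 1 := by
  intro a ha
  induction hd : p - 1 - i generalizing i a with
  | zero =>
    have ha_bot := Subgroup.lowerCentralSeries_antitone _ (show p - 1 ≤ i + 1 by lia) ha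
    rw [h_class, mem_bot] at ha_bot
    rw [ha_bot, one_pow]
  | succ d ih =>
    have h_center' : ∀ b ∈ (⊤ : Subgroup G).lowerCentralSeries (i + 1), b ^ p ^ k ∈ center G :=
      fun b hb => h_center b (Subgroup.lowerCentralSeries_antitone _ i.le_succ hb)
    exact pow_eq_one_of_mem_lowerCentralSeries_succ h_class
      (fun h hh => ih h_center' h hh (by lia)) h_center ha

theorem pow_mem_center_of_forall_commute
    (hk : ∀ h ∈ (⊤ : Subgroup G).lowerCentralSeries 2, h ^ p ^ k = 1) {x : G}
    (hx : ∀ y, Commute (y ^ p ^ k) x) : x ^ p ^ k ∈ center G := by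
  refine mem_center_iff.2 fun y => ?_
  have h_swap : ⁅x ^ p ^ k, y⁆ = ⁅y ^ p ^ k, x⁆⁻¹ := by
    rw [← commutatorElement_pow_prime_pow h_class hk (mem_top x),
      ← commutatorElement_pow_prime_pow h_class hk (mem_top y), ← inv_pow, commutatorElement_inv]
  rw [commutatorElement_eq_one_iff_commute.2 (hx y), inv_one,
    commutatorElement_eq_one_iff_mul_comm] at h_swap
  exact h_swap.symm

end BoundedClass

end PowerMap

section Quotients

variable {G : Type*} [Group G] (N : Subgroup G) [N.Normal]

theorem lowerCentralSeries_quotient_le_iff {n : ℕ} {H : Subgroup (G ⧸ N)} :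
    (⊤ : Subgroup (G ⧸ N)).lowerCentralSeries n ≤ H ↔
      (⊤ : Subgroup G).lowerCentralSeries n ≤ H.comap (QuotientGroup.mk' N) := by
  rw [← map_le_iff_le_comap, Subgroup.map_lowerCentralSeries,
    map_top_of_surjective _ (QuotientGroup.mk'_surjective N)]

theorem lowerCentralSeries_quotient_eq_bot_iff {n : ℕ} :
    (⊤ : Subgroup (G ⧸ N)).lowerCentralSeries n = ⊥ ↔
      (⊤ : Subgroup G).lowerCentralSeries n ≤ N := by
  rw [eq_bot_iff, lowerCentralSeries_quotient_le_iff, MonoidHom.comap_bot, QuotientGroup.ker_mk']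

theorem comap_mk'_zpowers (x : G) :
    (zpowers (x : G ⧸ N)).comap (QuotientGroup.mk' N) = zpowers x ⊔ N := by
  rw [← QuotientGroup.mk'_apply, ← MonoidHom.map_zpowers, QuotientGroup.comap_map_mk', sup_comm]

theorem card_comap_mk' (H : Subgroup (G ⧸ N)) :
    Nat.card (H.comap (QuotientGroup.mk' N)) = Nat.card N * Nat.card H :=
  QuotientGroup.card_preimage_mk N H

variable {N}

theorem orderOf_dvd_orderOf_mk_mul {m : ℕ} (hN : ∀ n ∈ N, n ^ m = 1) (x : G) :
    orderOf x ∣ orderOf (x : G ⧸ N) * m := by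
  apply orderOf_dvd_of_pow_eq_one
  rw [pow_mul]
  apply hN
  rw [← QuotientGroup.eq_one_iff, QuotientGroup.mk_pow, pow_orderOf_eq_one]

theorem orderOf_mk_eq_of_disjoint {x : G} (hx : Disjoint N (zpowers x)) :
    orderOf (x : G ⧸ N) = orderOf x := by
  refine (orderOf_map_dvd (QuotientGroup.mk' N) x).antisymm (orderOf_dvd_of_pow_eq_one ?_)
  refine disjoint_def.1 hx ?_ (pow_mem (mem_zpowers x) _)
  rw [QuotientGroup.mk'_apply, ← QuotientGroup.eq_one_iff, QuotientGroup.mk_pow, pow_orderOf_eq_one]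

theorem normal_of_le_center {H : Subgroup G} (hH : H ≤ center G) : H.Normal where
  conj_mem n hn g := by rwa [mem_center_iff.1 (hH hn) g, mul_inv_cancel_right]

theorem pow_card_eq_one_of_mem {H : Subgroup G} {h : G} (hh : h ∈ H) : h ^ Nat.card H = 1 :=
  congrArg Subtype.val (pow_card_eq_one' (x := (⟨h, hh⟩ : H)))

end Quotients

section PGroups

theorem top_ne_bot_of_not_isCyclic {G : Type*} [Group G] (hG : ¬IsCyclic G) :
    (⊤ : Subgroup G) ≠ ⊥ := fun h => hG <| by
  have := (Subgroup.subsingleton_iff (G := G)).1 (subsingleton_of_bot_eq_top h.symm)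
  infer_instance

variable {p : ℕ} [Fact p.Prime] {P : Type*} [Group P]

theorem exists_le_card_eq_prime [Finite P] (hP : IsPGroup p P) {H : Subgroup P} (hH : H ≠ ⊥) :
    ∃ L ≤ H, Nat.card L = p := by
  have h_dvd : p ∣ Nat.card H :=
    (hP.to_subgroup H).card_eq_or_dvd.resolve_left (mt Subgroup.card_eq_one.1 hH)
  simpa using Sylow.exists_subgroup_le_card_pow_prime_of_le_card (n := 1) Fact.out hP
    (by simpa using Nat.le_of_dvd Nat.card_pos h_dvd)

theorem inf_center_ne_bot [Finite P] (hP : IsPGroup p P) {H : Subgroup P} [H.Normal]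
    (hH : H ≠ ⊥) : H ⊓ center P ≠ ⊥ := by
  have h_dvd : p ∣ Nat.card H :=
    (hP.to_subgroup H).card_eq_or_dvd.resolve_left (mt Subgroup.card_eq_one.1 hH)
  obtain ⟨b, hb, hb_ne⟩ :=
    (hP.of_equiv ConjAct.toConjAct).exists_fixed_point_of_prime_dvd_card_of_fixed_point
      (α := H) h_dvd (a := 1) (fun g => by simp)
  have hb_center : (b : P) ∈ center P := mem_center_iff.2 fun g => by
    have h_fixed := congrArg Subtype.val (hb (ConjAct.toConjAct g))
    rw [ConjAct.Subgroup.val_conj_smul, ConjAct.toConjAct_smul] at h_fixed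
    exact mul_inv_eq_iff_eq_mul.1 h_fixed
  exact fun h => hb_ne <| Subtype.ext <| (mem_bot.1 (h ▸ mem_inf.2 ⟨b.2, hb_center⟩)).symm

theorem exists_le_inf_center_card_eq_prime [Finite P] (hP : IsPGroup p P) {H : Subgroup P}
    [H.Normal] (hH : H ≠ ⊥) : ∃ L ≤ H ⊓ center P, Nat.card L = p :=
  exists_le_card_eq_prime hP (inf_center_ne_bot hP hH)

theorem le_or_disjoint_of_card_eq_prime {L : Subgroup P} (hL : Nat.card L = p) (H : Subgroup P) :
    L ≤ H ∨ Disjoint L H := by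
  have : Fact (Nat.card L).Prime := ⟨hL ▸ Fact.out⟩
  exact (eq_bot_or_eq_top_of_prime_card (H.subgroupOf L)).symm.imp
    subgroupOf_eq_top.1 fun h => (subgroupOf_eq_bot.1 h).symm

theorem le_center_of_card_dvd_prime [Finite P] (hP : IsPGroup p P) {T : Subgroup P} [T.Normal]
    (hT : Nat.card T ∣ p) : T ≤ center P := by
  by_cases h_bot : T = ⊥
  · exact h_bot ▸ bot_le
  obtain ⟨L, hL, hL_card⟩ := exists_le_inf_center_card_eq_prime hP h_bot
  have hLT : L = T := eq_of_le_of_card_ge (hL.trans inf_le_left)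
    (hL_card ▸ Nat.le_of_dvd (Fact.out : p.Prime).pos hT)
  exact hLT ▸ hL.trans inf_le_right

theorem orderOf_pow_prime_pow {x : P} {k : ℕ} (hx : orderOf x = p ^ (k + 1)) :
    orderOf (x ^ p ^ k) = p := by
  have hp : p.Prime := Fact.out
  rw [orderOf_pow_of_dvd (pow_ne_zero _ hp.ne_zero) (hx ▸ pow_dvd_pow p k.le_succ), hx, pow_succ,
    Nat.mul_div_cancel_left _ (pow_pos hp.pos k)]

theorem pow_mem_of_ne_bot_of_le_zpowers [Finite P] (hP : IsPGroup p P) {x : P} {k : ℕ}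
    (hx : orderOf x = p ^ (k + 1)) {H : Subgroup P} (hH : H ≠ ⊥) (h_le : H ≤ zpowers x) :
    x ^ p ^ k ∈ H := by
  obtain ⟨L, hLH, hL_card⟩ := exists_le_card_eq_prime hP hH
  have hL_le : L ≤ zpowers (x ^ p ^ k) := fun y hy => by
    obtain ⟨i, rfl⟩ := mem_zpowers_iff.1 (h_le (hLH hy))
    have h_pow : x ^ (i * p) = 1 := by
      rw [zpow_mul, zpow_natCast, ← hL_card, pow_card_eq_one_of_mem hy]
    rw [← orderOf_dvd_iff_zpow_eq_one, hx, pow_succ, Nat.cast_mul] at h_pow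
    obtain ⟨c, rfl⟩ := Int.dvd_of_mul_dvd_mul_right (mod_cast (Fact.out : p.Prime).ne_zero) h_pow
    rw [zpow_mul, zpow_natCast]
    exact zpow_mem (mem_zpowers _) c
  have hL_eq : L = zpowers (x ^ p ^ k) :=
    eq_of_le_of_card_ge hL_le (by rw [Nat.card_zpowers, orderOf_pow_prime_pow hx, hL_card])
  exact hLH (hL_eq ▸ mem_zpowers _)

end PGroups

section NormalElementaryAbelian

variable {P : Type u} [Group P]

/-- The subgroup of the elements of `E` killed by `n`, when the `n`-th power map is multiplicative
on `E`. -/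
def powTorsion (E : Subgroup P) (n : ℕ)
    (hE : ∀ a ∈ E, ∀ b ∈ E, (a * b) ^ n = a ^ n * b ^ n) : Subgroup P where
  carrier := {g | g ∈ E ∧ g ^ n = 1}
  one_mem' := ⟨one_mem E, one_pow n⟩
  mul_mem' := fun ⟨ha, ha_pow⟩ ⟨hb, hb_pow⟩ =>
    ⟨mul_mem ha hb, by rw [hE _ ha _ hb, ha_pow, hb_pow, one_mul]⟩
  inv_mem' := fun ⟨ha, ha_pow⟩ => ⟨inv_mem ha, by rw [inv_pow, ha_pow, inv_one]⟩

theorem normal_powTorsion {E : Subgroup P} [E.Normal] {n : ℕ}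
    (hE : ∀ a ∈ E, ∀ b ∈ E, (a * b) ^ n = a ^ n * b ^ n) : (powTorsion E n hE).Normal where
  conj_mem := fun a ⟨ha, ha_pow⟩ g =>
    ⟨Normal.conj_mem ‹_› a ha g, by rw [conj_pow, ha_pow, mul_one, mul_inv_cancel]⟩

theorem card_le_card_mul_card_of_pow_mem [Finite P] {E N : Subgroup P} {n : ℕ}
    (hE : ∀ a ∈ E, ∀ b ∈ E, (a * b) ^ n = a ^ n * b ^ n) (h_pow : ∀ a ∈ E, a ^ n ∈ N)
    (h_torsion : ∀ a ∈ E, a ^ n = 1 → a ∈ N) : Nat.card E ≤ Nat.card N * Nat.card N := by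
  let φ : E →* P := MonoidHom.mk' (fun a => (a : P) ^ n) fun a b => hE a a.2 b b.2
  have h_range : φ.range ≤ N := by
    rintro _ ⟨a, rfl⟩
    exact h_pow a a.2
  have h_ker : φ.ker.map E.subtype ≤ N := by
    rintro _ ⟨a, ha, rfl⟩
    exact h_torsion a a.2 ha
  rw [← card_mul_index φ.ker, index_ker, ← card_map_of_injective E.subtype_injective]
  exact Nat.mul_le_mul (card_le_of_le h_ker) (card_le_of_le h_range)

variable {p : ℕ} [Fact p.Prime] [Finite P]

theorem exists_normal_le_card_eq_prime_sq (hP : IsPGroup p P) {N K : Subgroup P} [N.Normal]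
    [K.Normal] (hN : Nat.card N = p) (hNK : N < K) :
    ∃ U ≤ K, U.Normal ∧ Nat.card U = p ^ 2 := by
  have h_map_ne_bot : K.map (QuotientGroup.mk' N) ≠ ⊥ := by
    rw [Ne, Subgroup.map_eq_bot_iff, QuotientGroup.ker_mk']
    exact hNK.not_ge
  have := Normal.map ‹K.Normal› _ (QuotientGroup.mk'_surjective N)
  obtain ⟨L, hL, hL_card⟩ :=
    exists_le_inf_center_card_eq_prime (hP.to_quotient N) h_map_ne_bot
  have := normal_of_le_center (hL.trans inf_le_right)
  refine ⟨L.comap (QuotientGroup.mk' N), ?_, inferInstance, ?_⟩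
  · calc
      L.comap (QuotientGroup.mk' N) ≤ (K.map (QuotientGroup.mk' N)).comap (QuotientGroup.mk' N) :=
        comap_mono (hL.trans inf_le_left)
      _ = K := by rw [QuotientGroup.comap_map_mk', sup_eq_right.2 hNK.le]
  · rw [card_comap_mk', hN, hL_card, sq]

theorem exists_normal_elementaryAbelian_of_notMem (hp : 2 < p) (hP : IsPGroup p P)
    {N E : Subgroup P} [E.Normal] (hN_center : N ≤ center P) (hN : Nat.card N = p) (hNE : N ≤ E)
    (hE : ⁅E, E⁆ ≤ N) {w : P} (hwE : w ∈ E) (hwN : w ∉ N) (hw : w ^ p = 1) :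
    ∃ U : Subgroup P, U.Normal ∧ Nat.card U = p ^ 2 ∧ ∀ u ∈ U, u ^ p = 1 := by
  have hN_pow : ∀ h ∈ N, h ^ p = 1 := fun h hh => hN ▸ pow_card_eq_one_of_mem hh
  have hE_mul : ∀ a ∈ E, ∀ b ∈ E, (a * b) ^ p = a ^ p * b ^ p := fun a ha b hb =>
    mul_pow_prime_of_commutator_le_center hp (hE.trans hN_center)
      (fun h hh => hN_pow h (hE hh)) ha hb
  have := normal_of_le_center hN_center
  have := normal_powTorsion hE_mul
  have hN_lt : N < powTorsion E p hE_mul :=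
    lt_of_le_not_ge (fun h hh => ⟨hNE hh, hN_pow h hh⟩) fun h_le => hwN (h_le ⟨hwE, hw⟩)
  obtain ⟨U, hU, hU_normal, hU_card⟩ := exists_normal_le_card_eq_prime_sq hP hN hN_lt
  exact ⟨U, hU_normal, hU_card, fun u hu => (hU hu).2⟩

theorem exists_normal_elementaryAbelian_of_quotient (hp : 2 < p) (hP : IsPGroup p P)
    {N : Subgroup P} [N.Normal] (hN_center : N ≤ center P) (hN : Nat.card N = p)
    {V : Subgroup (P ⧸ N)} [V.Normal] (hV : Nat.card V = p ^ 2) (hV_pow : ∀ v ∈ V, v ^ p = 1) :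
    ∃ U : Subgroup P, U.Normal ∧ Nat.card U = p ^ 2 ∧ ∀ u ∈ U, u ^ p = 1 := by
  let E : Subgroup P := V.comap (QuotientGroup.mk' N)
  have hNE : N ≤ E := fun h hh => by
    simp [E, mem_comap, (QuotientGroup.eq_one_iff h).2 hh, one_mem]
  have hE_comm : ⁅E, E⁆ ≤ N := by
    have := IsPGroup.isMulCommutative_of_card_eq_prime_sq hV
    rw [← QuotientGroup.ker_mk' N, ← Subgroup.map_eq_bot_iff, map_commutator]
    exact eq_bot_mono (commutator_mono (map_comap_le _ _) (map_comap_le _ _))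
      (commutator_self_eq_bot_iff.2 this)
  have hN_pow : ∀ h ∈ N, h ^ p = 1 := fun h hh => hN ▸ pow_card_eq_one_of_mem hh
  have hE_mul : ∀ a ∈ E, ∀ b ∈ E, (a * b) ^ p = a ^ p * b ^ p := fun a ha b hb =>
    mul_pow_prime_of_commutator_le_center hp (hE_comm.trans hN_center)
      (fun h hh => hN_pow h (hE_comm hh)) ha hb
  have hE_pow : ∀ a ∈ E, a ^ p ∈ N := fun a ha =>
    (QuotientGroup.eq_one_iff _).1 (hV_pow _ ha)
  obtain ⟨w, hwE, hw, hwN⟩ : ∃ w ∈ E, w ^ p = 1 ∧ w ∉ N := by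
    by_contra! h
    have h_card := card_le_card_mul_card_of_pow_mem hE_mul hE_pow h
    rw [card_comap_mk', hN, hV, ← sq, ← pow_succ'] at h_card
    exact absurd ((Nat.pow_le_pow_iff_right (by lia)).1 h_card) (by simp)
  exact exists_normal_elementaryAbelian_of_notMem hp hP hN_center hN hNE hE_comm hwE hwN hw

theorem isCyclic_of_isCyclic_quotient (hP : IsPGroup p P) {N : Subgroup P} [N.Normal]
    [IsCyclic (P ⧸ N)] (hN : Nat.card N = p) (h_torsion : ∀ w : P, w ^ p = 1 → w ∈ N) :
    IsCyclic P := by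
  obtain ⟨g, hg⟩ := isCyclic_iff_exists_zpowers_eq_top.1 ‹IsCyclic (P ⧸ N)›
  obtain ⟨g, rfl⟩ := QuotientGroup.mk_surjective g
  have h_sup : zpowers g ⊔ N = ⊤ := by rw [← comap_mk'_zpowers, hg, comap_top]
  by_cases h_bot : zpowers g = ⊥
  · rw [h_bot, bot_sup_eq] at h_sup
    subst h_sup
    exact isCyclic_of_prime_card (p := p) (card_top (G := P) ▸ hN)
  obtain ⟨T, hT, hT_card⟩ := exists_le_card_eq_prime hP h_bot
  have hTN : T = N :=
    eq_of_le_of_card_ge (fun w hw => h_torsion w (hT_card ▸ pow_card_eq_one_of_mem hw))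
      (hN.trans hT_card.symm).le
  rw [← hTN, sup_eq_left.2 hT] at h_sup
  exact isCyclic_iff_exists_zpowers_eq_top.2 ⟨g, h_sup⟩

theorem exists_normal_elementaryAbelian (hp : 2 < p) (hP : IsPGroup p P) (h_cyclic : ¬IsCyclic P) :
    ∃ U : Subgroup P, U.Normal ∧ Nat.card U = p ^ 2 ∧ ∀ u ∈ U, u ^ p = 1 := by
  induction hn : Nat.card P using Nat.strong_induction_on generalizing P with
  | _ n ih =>
  obtain ⟨N, hN_le, hN_card⟩ :=
    exists_le_inf_center_card_eq_prime hP (top_ne_bot_of_not_isCyclic h_cyclic)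
  have hN_center := hN_le.trans inf_le_right
  have := normal_of_le_center hN_center
  by_cases hQ : IsCyclic (P ⧸ N)
  · obtain ⟨w, hw, hwN⟩ : ∃ w : P, w ^ p = 1 ∧ w ∉ N := by
      by_contra! h
      exact h_cyclic (isCyclic_of_isCyclic_quotient hP hN_card h)
    have h_comm : ⁅(⊤ : Subgroup P), ⊤⁆ ≤ N :=
      Normal.quotient_commutative_iff_commutator_le.1 inferInstance
    exact exists_normal_elementaryAbelian_of_notMem hp hP hN_center hN_card le_top h_comm
      (mem_top w) hwN hw
  · have hQ_card : Nat.card (P ⧸ N) < n := by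
      rw [← hn, N.card_eq_card_quotient_mul_card_subgroup, hN_card]
      exact lt_mul_of_one_lt_right Nat.card_pos (by lia)
    obtain ⟨V, hV_normal, hV_card, hV_pow⟩ := ih _ hQ_card (hP.to_quotient N) hQ rfl
    exact exists_normal_elementaryAbelian_of_quotient hp hP hN_center hN_card hV_card hV_pow

end NormalElementaryAbelian

section ClassBound

/-- `G` has order `p ^ (e + f)` and exponent `p ^ e`. For a prime `p` this makes `f` the coexponent
of `G`. -/
structure HasCoexponent (p e f : ℕ) (G : Type*) [Group G] : Prop where
  card_eq : Nat.card G = p ^ (e + f)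
  exponent_eq : Monoid.exponent G = p ^ e

namespace HasCoexponent

variable {p e f : ℕ} {G : Type*} [Group G]

theorem pow_eq_one (hG : HasCoexponent p e f G) (g : G) : g ^ p ^ e = 1 :=
  hG.exponent_eq ▸ Monoid.pow_exponent_eq_one g

theorem isPGroup (hG : HasCoexponent p e f G) : IsPGroup p G :=
  IsPGroup.of_card hG.card_eq

end HasCoexponent

/-- The class bound for the `p`-group `G`, in the form that goes through by induction on the order:
the penultimate term of the lower central series lies in every cyclic subgroup of maximal order. -/
def SatisfiesClassBound (p : ℕ) (G : Type*) [Group G] : Prop :=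
  ∀ e f : ℕ, HasCoexponent p e f G → f + 1 < p →
    (⊤ : Subgroup G).lowerCentralSeries (f + 1) = ⊥ ∧
      ∀ x : G, orderOf x = p ^ e → (⊤ : Subgroup G).lowerCentralSeries f ≤ zpowers x

theorem card_quotient_eq_prime_pow {G : Type*} [Group G] {p m j : ℕ} [Fact p.Prime]
    {N : Subgroup G} [N.Normal] (hN : Nat.card N = p ^ j) (hG : Nat.card G = p ^ (m + j)) :
    Nat.card (G ⧸ N) = p ^ m := by
  rw [N.card_eq_card_quotient_mul_card_subgroup, hN, pow_add] at hG
  exact Nat.eq_of_mul_eq_mul_right (pow_pos (Fact.out : p.Prime).pos j) hG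

theorem exponent_dvd_exponent_quotient_mul {G : Type*} [Group G] {N : Subgroup G} [N.Normal] {m : ℕ}
    (hN : ∀ n ∈ N, n ^ m = 1) : Monoid.exponent G ∣ Monoid.exponent (G ⧸ N) * m :=
  Monoid.exponent_dvd.2 fun x => (orderOf_dvd_orderOf_mk_mul hN x).trans
    (mul_dvd_mul_right (Monoid.order_dvd_exponent _) m)

variable {p : ℕ} [hp : Fact p.Prime]

theorem exists_hasCoexponent {G : Type*} [Group G] {n : ℕ} (hG : Nat.card G = p ^ n) :
    ∃ e f, e + f = n ∧ HasCoexponent p e f G := by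
  obtain ⟨e, he, h_exp⟩ :=
    (Nat.dvd_prime_pow hp.out).1 (hG ▸ Group.exponent_dvd_nat_card (G := G))
  exact ⟨e, n - e, by lia, by rw [hG]; congr 1; lia, h_exp⟩

variable {P : Type u} [Group P] {e f : ℕ}

namespace HasCoexponent

theorem finite (hP : HasCoexponent p e f P) : Finite P :=
  Nat.finite_of_card_ne_zero (hP.card_eq ▸ pow_ne_zero _ hp.out.ne_zero)

theorem exists_orderOf_eq (hP : HasCoexponent p e f P) : ∃ x : P, orderOf x = p ^ e := by
  obtain ⟨x, hx⟩ := hp.out.exists_orderOf_eq_pow_factorization_exponent P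
  exact ⟨x, by rw [hx, hP.exponent_eq, hp.out.factorization_pow, Finsupp.single_eq_same]⟩

theorem isCyclic_iff (hP : HasCoexponent p e f P) : IsCyclic P ↔ f = 0 := by
  have := hP.finite
  refine ⟨fun _ => ?_, ?_⟩
  · have h_eq := IsCyclic.exponent_eq_card (α := P)
    rw [hP.card_eq, hP.exponent_eq] at h_eq
    have := Nat.pow_right_injective hp.out.two_le h_eq
    lia
  · rintro rfl
    obtain ⟨x, hx⟩ := hP.exists_orderOf_eq
    exact isCyclic_of_orderOf_eq_card x (by rw [hx, hP.card_eq, add_zero])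

theorem not_isCyclic (hP : HasCoexponent p e (f + 1) P) : ¬IsCyclic P :=
  hP.isCyclic_iff.not.2 f.succ_ne_zero

theorem exponent_ne_zero (hP : HasCoexponent p e (f + 1) P) : e ≠ 0 := by
  rintro rfl
  have := Monoid.exp_eq_one_iff.1 hP.exponent_eq
  exact hP.not_isCyclic inferInstance

theorem lowerCentralSeries_of_eq_zero (hP : HasCoexponent p e 0 P) :
    (⊤ : Subgroup P).lowerCentralSeries 1 = ⊥ ∧
      ∀ x : P, orderOf x = p ^ e → (⊤ : Subgroup P).lowerCentralSeries 0 ≤ zpowers x := by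
  have := hP.isCyclic_iff.2 rfl
  have := hP.finite
  refine ⟨commutator_self_eq_bot_iff.2 inferInstance, fun x hx => ?_⟩
  exact (eq_top_of_card_eq (zpowers x) (by rw [Nat.card_zpowers, hx, hP.card_eq, add_zero])).ge

end HasCoexponent

theorem lowerCentralSeries_le_zpowers_of_le_zpowers {N : Subgroup P} [N.Normal]
    (h_quotient : SatisfiesClassBound p (P ⧸ N)) (hP : HasCoexponent p (e + 1) (f + 1) P)
    (hf : f + 2 < p) {x : P} (hx : orderOf x = p ^ (e + 1)) (hN : Nat.card N = p)
    (hNx : N ≤ zpowers x) : (⊤ : Subgroup P).lowerCentralSeries (f + 1) ≤ zpowers x := by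
  have hN_pow : ∀ h ∈ N, h ^ p = 1 := fun h hh => hN ▸ pow_card_eq_one_of_mem hh
  obtain ⟨e', f', h_add, hQ⟩ := exists_hasCoexponent <| card_quotient_eq_prime_pow (m := e + f + 1)
    ((pow_one p).symm ▸ hN) (by rw [hP.card_eq]; congr 1; ring)
  have h_order_dvd := orderOf_dvd_orderOf_mk_mul hN_pow x
  have h_mk_dvd : orderOf (x : P ⧸ N) ∣ p ^ e' := hQ.exponent_eq ▸ Monoid.order_dvd_exponent _
  have he' : e ≤ e' := by
    have h_dvd := h_order_dvd.trans (mul_dvd_mul_right h_mk_dvd p)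
    rw [hx, ← pow_succ, Nat.pow_dvd_pow_iff_le_right hp.out.one_lt] at h_dvd
    lia
  have he'_le : e' ≤ e + 1 := by
    have h_dvd := Group.exponent_quotient_dvd N
    rw [hQ.exponent_eq, hP.exponent_eq] at h_dvd
    exact (Nat.pow_dvd_pow_iff_le_right hp.out.one_lt).1 h_dvd
  obtain rfl | rfl : e' = e ∨ e' = e + 1 := by lia
  · obtain rfl : f' = f + 1 := by lia
    rw [hx, pow_succ] at h_order_dvd
    have hx_mk := h_mk_dvd.antisymm (Nat.dvd_of_mul_dvd_mul_right hp.out.pos h_order_dvd)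
    have h_le := (h_quotient _ _ hQ hf).2 x hx_mk
    rwa [lowerCentralSeries_quotient_le_iff, comap_mk'_zpowers, sup_eq_left.2 hNx] at h_le
  · obtain rfl : f' = f := by lia
    have h_bot := (h_quotient _ _ hQ (by lia)).1
    exact ((lowerCentralSeries_quotient_eq_bot_iff N).1 h_bot).trans hNx

theorem pow_mem_lowerCentralSeries (h_bound : SatisfiesClassBound p P)
    (hP : HasCoexponent p (e + 1) f P) (hf : f + 1 < p)
    (h_ne_bot : (⊤ : Subgroup P).lowerCentralSeries f ≠ ⊥) (g : P) :
    g ^ p ^ e ∈ (⊤ : Subgroup P).lowerCentralSeries f := by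
  have := hP.finite
  by_cases hg : g ^ p ^ e = 1
  · exact hg ▸ one_mem _
  have hg_order : orderOf g = p ^ (e + 1) := orderOf_eq_prime_pow hg (hP.pow_eq_one g)
  exact pow_mem_of_ne_bot_of_le_zpowers hP.isPGroup hg_order h_ne_bot
    ((h_bound _ _ hP hf).2 g hg_order)

theorem HasCoexponent.quotient_of_disjoint (hP : HasCoexponent p e (f + 1) P) {L : Subgroup P}
    [L.Normal] (hL : Nat.card L = p) {x : P} (hx : orderOf x = p ^ e)
    (hLx : Disjoint L (zpowers x)) : HasCoexponent p e f (P ⧸ L) where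
  card_eq := card_quotient_eq_prime_pow ((pow_one p).symm ▸ hL) (by rw [hP.card_eq, add_assoc])
  exponent_eq := by
    apply Nat.dvd_antisymm
    · exact hP.exponent_eq ▸ Group.exponent_quotient_dvd L
    · rw [← hx, ← orderOf_mk_eq_of_disjoint hLx]
      exact Monoid.order_dvd_exponent _

theorem lowerCentralSeries_eq_bot_or_pow_mem_center {L : Subgroup P} [L.Normal]
    (h_quotient : SatisfiesClassBound p (P ⧸ L)) (hP : HasCoexponent p (e + 1) (f + 1) P)
    (hf : f + 2 < p) {x : P} (hx : orderOf x = p ^ (e + 1)) (hL : Nat.card L = p)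
    (hL_center : L ≤ center P) (hLx : Disjoint L (zpowers x)) :
    (⊤ : Subgroup P).lowerCentralSeries (f + 1) = ⊥ ∨ x ^ p ^ e ∈ center P := by
  have hQ := hP.quotient_of_disjoint hL hx hLx
  have hx_mk : orderOf (x : P ⧸ L) = p ^ (e + 1) := (orderOf_mk_eq_of_disjoint hLx).trans hx
  obtain ⟨hQ_class, hQ_le⟩ := h_quotient _ _ hQ (by lia)
  by_cases h_bot : (⊤ : Subgroup (P ⧸ L)).lowerCentralSeries f = ⊥
  · left
    rw [Subgroup.lowerCentralSeries_succ_eq_bot]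
    exact ((lowerCentralSeries_quotient_eq_bot_iff L).1 h_bot).trans hL_center
  right
  have h_pow_mem := pow_mem_lowerCentralSeries h_quotient hQ (by lia) h_bot
  have hP_class : (⊤ : Subgroup P).lowerCentralSeries (p - 1) = ⊥ := by
    refine eq_bot_mono (Subgroup.lowerCentralSeries_antitone _ (show f + 2 ≤ p - 1 by lia)) ?_
    rw [Subgroup.lowerCentralSeries_succ_eq_bot]
    exact ((lowerCentralSeries_quotient_eq_bot_iff L).1 hQ_class).trans hL_center
  have hQ_exp : ∀ a ∈ (⊤ : Subgroup (P ⧸ L)).lowerCentralSeries 1, a ^ p ^ e = 1 :=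
    pow_eq_one_of_forall_pow_mem_center
      (eq_bot_mono (Subgroup.lowerCentralSeries_antitone _ (by lia)) hQ_class)
      fun a _ => commutator_top_right_eq_bot_iff_le_center.1 hQ_class (h_pow_mem a)
  have hP_exp : ∀ a ∈ (⊤ : Subgroup P).lowerCentralSeries 2, a ^ p ^ e = 1 :=
    pow_eq_one_of_forall_pow_mem_center hP_class fun a ha => hL_center <|
      (QuotientGroup.eq_one_iff _).1 <|
        hQ_exp a ((lowerCentralSeries_quotient_le_iff L).1 le_rfl ha)
  refine pow_mem_center_of_forall_commute hP_class hP_exp fun y => ?_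
  have hy_mem : y ^ p ^ e ∈ zpowers x ⊔ L :=
    comap_mk'_zpowers L x ▸ hQ_le x hx_mk (h_pow_mem y)
  have h_le : zpowers x ⊔ L ≤ centralizer {x} :=
    sup_le (zpowers_le.2 (mem_centralizer_singleton_iff.2 rfl))
      (hL_center.trans (center_le_centralizer _))
  exact mem_centralizer_singleton_iff.1 (h_le hy_mem)

section InductionStep

variable (h_quotient : ∀ (N : Subgroup P) [N.Normal], N ≠ ⊥ → SatisfiesClassBound p (P ⧸ N))

include h_quotient

theorem lowerCentralSeries_le_zpowers (hP : HasCoexponent p (e + 1) (f + 1) P) (hf : f + 2 < p)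
    {x : P} (hx : orderOf x = p ^ (e + 1)) :
    (⊤ : Subgroup P).lowerCentralSeries (f + 1) ≤ zpowers x := by
  have := hP.finite
  have ne_bot {N : Subgroup P} (hN : Nat.card N = p) : N ≠ ⊥ := fun h =>
    hp.out.ne_one (hN.symm.trans (Subgroup.card_eq_one.2 h))
  obtain ⟨L, hL_le, hL⟩ := exists_le_inf_center_card_eq_prime hP.isPGroup
    (top_ne_bot_of_not_isCyclic hP.not_isCyclic)
  have hL_center := hL_le.trans inf_le_right
  have := normal_of_le_center hL_center
  have h_quotientL := h_quotient L (ne_bot hL)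
  obtain hLx | hLx := le_or_disjoint_of_card_eq_prime hL (zpowers x)
  · exact lowerCentralSeries_le_zpowers_of_le_zpowers h_quotientL hP hf hx hL hLx
  · obtain h_bot | h_center :=
      lowerCentralSeries_eq_bot_or_pow_mem_center h_quotientL hP hf hx hL hL_center hLx
    · exact h_bot ▸ bot_le
    · have hD : Nat.card (zpowers (x ^ p ^ e)) = p :=
        (Nat.card_zpowers _).trans (orderOf_pow_prime_pow hx)
      have := normal_of_le_center (zpowers_le.2 h_center)
      exact lowerCentralSeries_le_zpowers_of_le_zpowers (h_quotient _ (ne_bot hD)) hP hf hx hD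
        (zpowers_le.2 (pow_mem (mem_zpowers x) _))

theorem lowerCentralSeries_le_of_normal_elementaryAbelian
    (hP : HasCoexponent p (e + 1) (f + 1) P) (hf : f + 2 < p) {U : Subgroup P} [U.Normal]
    (hU : Nat.card U = p ^ 2) (hU_pow : ∀ u ∈ U, u ^ p = 1) :
    (⊤ : Subgroup P).lowerCentralSeries (f + 1) ≤ U := by
  obtain ⟨e', f', h_add, hQ⟩ := exists_hasCoexponent <| card_quotient_eq_prime_pow (m := e + f)
    hU (by rw [hP.card_eq]; congr 1; ring)
  have he' : e ≤ e' := by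
    have h_dvd := exponent_dvd_exponent_quotient_mul hU_pow
    rw [hP.exponent_eq, hQ.exponent_eq, ← pow_succ] at h_dvd
    exact Nat.le_of_succ_le_succ ((Nat.pow_dvd_pow_iff_le_right hp.out.one_lt).1 h_dvd)
  have hU_ne_bot : U ≠ ⊥ := fun h => by
    rw [h, Subgroup.card_bot] at hU
    exact (Nat.one_lt_pow two_ne_zero hp.out.one_lt).ne hU
  rw [← lowerCentralSeries_quotient_eq_bot_iff]
  exact eq_bot_mono (Subgroup.lowerCentralSeries_antitone _ (by lia))
    (h_quotient U hU_ne_bot _ _ hQ (by lia)).1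

theorem lowerCentralSeries_add_two_eq_bot (hP : HasCoexponent p (e + 1) (f + 1) P)
    (hf : f + 2 < p) : (⊤ : Subgroup P).lowerCentralSeries (f + 2) = ⊥ := by
  have := hP.finite
  obtain ⟨x, hx⟩ := hP.exists_orderOf_eq
  obtain ⟨U, hU_normal, hU, hU_pow⟩ :=
    exists_normal_elementaryAbelian (by lia) hP.isPGroup hP.not_isCyclic
  have h_le_zpowers := lowerCentralSeries_le_zpowers h_quotient hP hf hx
  have h_le_U := lowerCentralSeries_le_of_normal_elementaryAbelian h_quotient hP hf hU hU_pow
  have := isCyclic_of_le h_le_zpowers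
  rw [Subgroup.lowerCentralSeries_succ_eq_bot]
  apply le_center_of_card_dvd_prime hP.isPGroup
  rw [← IsCyclic.exponent_eq_card]
  exact Monoid.exponent_dvd_of_forall_pow_eq_one fun t => Subtype.ext (hU_pow _ (h_le_U t.2))

theorem satisfiesClassBound_of_quotient : SatisfiesClassBound p P := by
  intro e f hP hf
  obtain _ | f := f
  · exact hP.lowerCentralSeries_of_eq_zero
  obtain ⟨e, rfl⟩ := Nat.exists_eq_succ_of_ne_zero hP.exponent_ne_zero
  exact ⟨lowerCentralSeries_add_two_eq_bot h_quotient hP hf,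
    fun x hx => lowerCentralSeries_le_zpowers h_quotient hP hf hx⟩

end InductionStep

theorem satisfiesClassBound (P : Type u) [Group P] [Finite P] : SatisfiesClassBound p P := by
  induction hn : Nat.card P using Nat.strong_induction_on generalizing P with
  | _ n ih =>
  refine satisfiesClassBound_of_quotient fun N _ hN => ih _ ?_ (P ⧸ N) rfl
  rw [← hn, N.card_eq_card_quotient_mul_card_subgroup]
  exact lt_mul_of_one_lt_right Nat.card_pos ((one_lt_card_iff_ne_bot N).2 hN)

end ClassBound

/-- Let `P` be a finite `p`-group of order `p ^ n` and exponent `p ^ e`,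
so that its coexponent is `f(P) = n - e`.  If `p > f(P) + 1` then the nilpotency class of `P`
is at most `f(P) + 1`; equivalently, the `(f(P)+1)`-st term of the lower central series
(with `lowerCentralSeries P 0 = ⊤`) is trivial. -/
theorem coexponent_class_bound (p n e : ℕ) (hp : p.Prime) (P : Type) [Group P] [Finite P]
    (hcard : Nat.card P = p ^ n) (hexp : Monoid.exponent P = p ^ e)
    (hpf : p > (n - e) + 1) :
    Subgroup.lowerCentralSeries (⊤ : Subgroup P) ((n - e) + 1) = ⊥ := by
  have := Fact.mk hp
  have h_le : e ≤ n := by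
    rw [← Nat.pow_dvd_pow_iff_le_right hp.one_lt, ← hexp, ← hcard]
    exact Group.exponent_dvd_nat_card
  have h_coexponent : HasCoexponent p e (n - e) P := ⟨by rw [hcard, Nat.add_sub_cancel' h_le], hexp⟩
  exact (satisfiesClassBound P e (n - e) h_coexponent hpf).1
end

section
/- Fix an integer f ≥ 3. For every prime p with p > f + 1, the number Ψ_{n,f}^p of isomorphism classes of groups of order p^n with coexponent f is independent of n for n ≥ 3f; that is, for all n, n' ≥ 3f, Ψ_{n,f}^p = Ψ_{n',f}^p. -/
/-- The multiplication extracted from a group structure. -/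
def mulOfGroup (G : Type) (s : Group G) : Mul G := by letI := s; infer_instance

/-- The number of isomorphism classes of groups of order `N` whose group structure
satisfies the predicate `Q`. -/
noncomputable def groupClassCount (N : ℕ) (Q : Group (Fin N) → Prop) : ℕ :=
  Nat.card (Quot fun s t : {s : Group (Fin N) // Q s} =>
    Nonempty (@MulEquiv (Fin N) (Fin N) (mulOfGroup _ s.1) (mulOfGroup _ t.1)))

/-- `Ψ_{n,f}^p`: the number of isomorphism classes of groups of order `p ^ n`
with coexponent `f`, i.e. with exponent `p ^ e` where `n - e = f`. -/
noncomputable def PsiCoexp (p n f : ℕ) : ℕ :=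
  groupClassCount (p ^ n) fun s =>
    letI := s
    ∃ e : ℕ, Monoid.exponent (Fin (p ^ n)) = p ^ e ∧ n - e = f

/-!
Let `G` have order `p ^ n` and coexponent `f`, and put `q = p ^ f` and `N = p ^ (n - 2 * f)`, so
that `q ∣ N` and `G` contains an element `x` of order `N * q`. Climbing from `⟨x⟩` to `G` through
subgroups, each of index `p` in the next, shows that `g ↦ g ^ q` is an endomorphism of `G` with
central image `⟨x ^ q⟩`. Let `K` be its kernel, a group of order `q ^ 2`. Then `G` is an extension
of `K` by a cyclic group of order `N` generated by the class of `x`, so it is determined by `N`, the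
automorphism `α` of `K` induced by `x` and the element `t = x ^ N` of `K`.

The conditions that `(K, α, t)` has to satisfy do not involve `N`: they force `α ^ q = 1` and `t` to
be central, whence `α ^ N` is conjugation by `t` for every multiple `N` of `q`. Two such extensions
are isomorphic if and only if their data agree up to an isomorphism of the kernels and a replacement
of `x` by some `l * x ^ j`, where `N` enters only through the condition that `j` is coprime to `N`,
that is, to `p`. So the data and their equivalence are the same for all `n ≥ 3 * f`.
-/

universe u v

section GeomSum

open Finset

theorem mul_dvd_geom_sum_sub {n : ℕ} (hn : Odd n) {d l : ℤ} (hnl : (n : ℤ) ∣ l - 1)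
    (hdl : d ∣ l - 1) : d * n ∣ ∑ i ∈ range n, l ^ i - n := by
  have hfactor : ∑ i ∈ range n, l ^ i - n = (l - 1) * ∑ i ∈ range n, ∑ j ∈ range i, l ^ j := by
    simp only [mul_sum (range n), mul_geom_sum, sum_sub_distrib, sum_const, card_range,
      nsmul_eq_mul, mul_one]
  have hl : l ≡ 1 [ZMOD n] := (Int.modEq_iff_dvd.2 hnl).symm
  have hsum : ∑ i ∈ range n, ∑ j ∈ range i, l ^ j ≡ ∑ i ∈ range n, (i : ℤ) [ZMOD n] := by
    refine Int.ModEq.sum fun i _ ↦ ?_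
    simpa using Int.ModEq.sum fun j (_ : j ∈ range i) ↦ hl.pow j
  have hgauss : (n : ℤ) ∣ ∑ i ∈ range n, (i : ℤ) := by
    obtain ⟨k, rfl⟩ := hn
    have := sum_range_id_mul_two (2 * k + 1)
    exact ⟨k, by zify at this; push_cast at this ⊢; linarith⟩
  rw [hfactor]
  exact mul_dvd_mul hdl (hsum.dvd_iff.2 hgauss)

end GeomSum

theorem pow_dvd_sub_one_of_pow_succ_dvd_pow_sub_one {p : ℕ} (hp : p.Prime) (hodd : Odd p) {s : ℕ}
    {l : ℤ} (h : (p : ℤ) ^ (s + 1) ∣ l ^ p - 1) : (p : ℤ) ^ s ∣ l - 1 := by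
  have := Fact.mk hp
  have hl1 : (p : ℤ) ∣ l - 1 := by
    have hdvd : (p : ℤ) ∣ l ^ p - 1 := (dvd_pow_self _ s.succ_ne_zero).trans h
    rw [← ZMod.intCast_zmod_eq_zero_iff_dvd] at hdvd ⊢
    simpa only [Int.cast_sub, Int.cast_pow, ZMod.pow_card] using hdvd
  have hl : ¬ (p : ℤ) ∣ l := fun hl ↦
    (Nat.prime_iff_prime_int.1 hp).not_dvd_one ((dvd_sub_right hl).1 hl1)
  have hlte : emultiplicity (p : ℤ) (l ^ p - 1) = emultiplicity (p : ℤ) (l - 1) + 1 := by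
    rw [← one_pow p, Int.emultiplicity_pow_sub_pow hp hodd hl1 hl,
      (Nat.finiteMultiplicity_iff.2 ⟨hp.ne_one, hp.pos⟩).emultiplicity_self, one_pow]
  have hle := le_emultiplicity_of_pow_dvd h
  rw [hlte, Nat.cast_add, Nat.cast_one] at hle
  exact pow_dvd_of_le_emultiplicity ((ENat.add_le_add_iff_right ENat.one_ne_top).1 hle)

section Conjugation

variable {G : Type*} [Group G] {g z : G} {l : ℤ}

theorem semiconjBy_pow_left (h : SemiconjBy g z (z ^ l)) (k : ℕ) :
    SemiconjBy (g ^ k) z (z ^ l ^ k) := by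
  induction k with
  | zero => simp
  | succ k ih =>
    rw [pow_succ' g, pow_succ' l, zpow_mul]
    exact (h.zpow_right _).mul_left ih

variable {p s : ℕ}

theorem pow_dvd_sub_one_of_semiconjBy (hp : p.Prime) (hodd : Odd p) (hz : orderOf z = p ^ (s + 1))
    (h : SemiconjBy g z (z ^ l)) (hgp : Commute (g ^ p) z) : (p : ℤ) ^ s ∣ l - 1 := by
  refine pow_dvd_sub_one_of_pow_succ_dvd_pow_sub_one hp hodd ?_
  have hzl : z ^ l ^ p = z := mul_right_cancel ((semiconjBy_pow_left h p).eq.symm.trans hgp.eq)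
  rw [← Nat.cast_pow, ← hz, orderOf_dvd_iff_zpow_eq_one, zpow_sub_one, hzl, mul_inv_cancel]

theorem commute_pow_of_semiconjBy (hz : orderOf z = p ^ (s + 1)) (h : SemiconjBy g z (z ^ l))
    (hl : (p : ℤ) ^ s ∣ l - 1) : Commute g (z ^ p) := by
  have hzl : (z ^ l) ^ p = z ^ p := by
    rw [← zpow_natCast, ← zpow_natCast, ← zpow_mul, zpow_eq_zpow_iff_modEq, hz]
    refine (Int.modEq_iff_dvd.2 ?_).symm
    rw [← sub_one_mul, Nat.cast_pow, pow_succ]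
    exact mul_dvd_mul_right hl _
  rw [Commute, ← hzl]
  simpa only [hzl] using h.pow_right p

end Conjugation

/-- The `q`-th power map of `G` is a homomorphism onto the subgroup generated by `x ^ q`, and this
subgroup is central. -/
structure IsCentralPow {G : Type*} [Group G] (q : ℕ) (x : G) : Prop where
  mul_pow : ∀ a b : G, (a * b) ^ q = a ^ q * b ^ q
  exists_zpow_eq : ∀ g : G, ∃ j : ℤ, (x ^ q) ^ j = g ^ q
  commute : ∀ g : G, Commute (x ^ q) g

theorem isCentralPow_one {G : Type*} [Group G] {x : G} (hx : ∀ g, g ∈ Subgroup.zpowers x) :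
    IsCentralPow 1 x where
  mul_pow := by simp
  exists_zpow_eq g := by simpa using Subgroup.mem_zpowers_iff.1 (hx g)
  commute g := by
    obtain ⟨j, rfl⟩ := hx g
    simp

theorem mul_pow_of_index_prime {G : Type*} [Group G] {p n : ℕ} (hp : p.Prime) {M : Subgroup G}
    [M.Normal] (hM : M.index = p) (hcomm : ∀ g h : G, Commute (g ^ n) h)
    (hmul : ∀ m ∈ M, ∀ g : G, (m * g) ^ n = m ^ n * g ^ n) (a b : G) :
    (a * b) ^ n = a ^ n * b ^ n := by
  have := Fact.mk hp
  by_cases ha : a ∈ M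
  · exact hmul a ha b
  obtain ⟨i, hi⟩ : ∃ i : ℕ, (a : G ⧸ M) ^ i = b :=
    mem_powers_of_prime_card hM (by rwa [Ne, QuotientGroup.eq_one_iff])
  obtain ⟨m, hm, rfl⟩ : ∃ m ∈ M, b = m * a ^ i := by
    refine ⟨b * (a ^ i)⁻¹, ?_, by group⟩
    rw [← QuotientGroup.eq_one_iff, QuotientGroup.mk_mul, QuotientGroup.mk_inv,
      QuotientGroup.mk_pow, hi, mul_inv_cancel]
  calc (a * (m * a ^ i)) ^ n = ((a * m * a⁻¹) * a ^ (i + 1)) ^ n := by rw [pow_succ']; group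
    _ = m ^ n * (a ^ (i + 1)) ^ n := by
      rw [hmul _ (‹M.Normal›.conj_mem m hm a), conj_pow, ← (hcomm m a).eq, mul_inv_cancel_right]
    _ = a ^ n * (m * a ^ i) ^ n := by
      rw [hmul m hm, pow_succ', (Commute.self_pow a i).mul_pow, ← mul_assoc, ← mul_assoc,
        (hcomm m _).eq]

namespace IsCentralPow

variable {G : Type*} [Group G] {M : Subgroup G} {p q s : ℕ} {x : G}

section NormalSubgroup

variable {hx : x ∈ M} (h : IsCentralPow q (⟨x, hx⟩ : M))
include h

theorem exists_zpow_eq_of_mem {a : G} (ha : a ∈ M) : ∃ j : ℤ, (x ^ q) ^ j = a ^ q := by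
  obtain ⟨j, hj⟩ := h.exists_zpow_eq ⟨a, ha⟩
  exact ⟨j, by simpa using congrArg Subtype.val hj⟩

theorem commute_of_mem {a : G} (ha : a ∈ M) : Commute (x ^ q) a := by
  simpa using (h.commute ⟨a, ha⟩).map M.subtype

theorem mul_pow_of_mem {a b : G} (ha : a ∈ M) (hb : b ∈ M) : (a * b) ^ q = a ^ q * b ^ q := by
  simpa using congrArg Subtype.val (h.mul_pow ⟨a, ha⟩ ⟨b, hb⟩)

theorem exists_semiconjBy [M.Normal] (g : G) : ∃ l : ℤ, SemiconjBy g (x ^ q) ((x ^ q) ^ l) := by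
  obtain ⟨l, hl⟩ := h.exists_zpow_eq_of_mem (‹M.Normal›.conj_mem x hx g)
  exact ⟨l, by rw [hl, conj_pow, SemiconjBy, inv_mul_cancel_right]⟩

theorem exists_mul_pow_eq [M.Normal] {g m : G} (hm : m ∈ M) {l j : ℤ}
    (hl : SemiconjBy g (x ^ q) ((x ^ q) ^ l)) (hj : (x ^ q) ^ j = m ^ q) (k : ℕ) :
    ∃ w ∈ M, (m * g) ^ k = w * g ^ k ∧ w ^ q = (x ^ q) ^ (j * ∑ i ∈ Finset.range k, l ^ i) := by
  induction k with
  | zero => exact ⟨1, M.one_mem, by simp⟩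
  | succ k ih =>
    obtain ⟨w, hw, hwk, hwq⟩ := ih
    have hgw : g * w * g⁻¹ ∈ M := ‹M.Normal›.conj_mem w hw g
    refine ⟨m * (g * w * g⁻¹), M.mul_mem hm hgw, ?_, ?_⟩
    · rw [pow_succ', hwk, pow_succ' g]; group
    · rw [h.mul_pow_of_mem hm hgw, conj_pow, hwq, ← hj, (hl.zpow_right _).eq,
        mul_inv_cancel_right, ← zpow_mul, ← zpow_add, geom_sum_succ]
      ring_nf

variable (hp : p.Prime) (hodd : Odd p) (hs : s ≠ 0) (hxq : orderOf (x ^ q) = p ^ (s + 1))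
  [M.Normal] (hM : M.index = p)
include hp hxq hM

theorem exists_zpow_eq_pow_mul {g : G} (hg : g ^ (q * p ^ (s + 1)) = 1) :
    ∃ j : ℤ, (x ^ (q * p)) ^ j = g ^ (q * p) := by
  obtain ⟨j, hj⟩ := h.exists_zpow_eq_of_mem (hM ▸ M.pow_index_mem g : g ^ p ∈ M)
  have hpj : (p : ℤ) ∣ j := by
    have hz : (x ^ q) ^ (j * (p ^ s : ℕ)) = 1 := by
      rw [zpow_mul, hj, zpow_natCast, ← pow_mul, ← pow_mul, ← hg]
      ring_nf
    rw [← orderOf_dvd_iff_zpow_eq_one, hxq, pow_succ', Nat.cast_mul] at hz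
    exact Int.dvd_of_mul_dvd_mul_right (by exact_mod_cast pow_ne_zero s hp.ne_zero) hz
  obtain ⟨i, rfl⟩ := hpj
  exact ⟨i, by rw [pow_mul, ← zpow_natCast, ← zpow_mul, hj, ← pow_mul, mul_comm q]⟩

include hodd

theorem exists_dvd_sub_one_semiconjBy (g : G) :
    ∃ l : ℤ, (p : ℤ) ^ s ∣ l - 1 ∧ SemiconjBy g (x ^ q) ((x ^ q) ^ l) := by
  obtain ⟨l, hl⟩ := h.exists_semiconjBy g
  have hgp : Commute (g ^ p) (x ^ q) := (h.commute_of_mem (hM ▸ M.pow_index_mem g)).symm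
  exact ⟨l, pow_dvd_sub_one_of_semiconjBy hp hodd hxq hl hgp, hl⟩

theorem commute_pow_mul (g : G) : Commute (x ^ (q * p)) g := by
  obtain ⟨l, hl, hg⟩ := h.exists_dvd_sub_one_semiconjBy hp hodd hxq hM g
  rw [pow_mul]
  exact (commute_pow_of_semiconjBy hxq hg hl).symm

include hs in
theorem mul_pow_mul_of_mem {m : G} (hm : m ∈ M) (g : G) :
    (m * g) ^ (q * p) = m ^ (q * p) * g ^ (q * p) := by
  obtain ⟨l, hl, hg⟩ := h.exists_dvd_sub_one_semiconjBy hp hodd hxq hM g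
  obtain ⟨j, hj⟩ := h.exists_zpow_eq_of_mem hm
  obtain ⟨w, hw, hwp, hwq⟩ := h.exists_mul_pow_eq hm hg hj p
  have hgeom : (p : ℤ) ^ s * p ∣ ∑ i ∈ Finset.range p, l ^ i - p :=
    mul_dvd_geom_sum_sub hodd ((dvd_pow_self _ hs).trans hl) hl
  have hwm : w ^ q = m ^ (q * p) := by
    rw [hwq, pow_mul, ← hj, ← zpow_natCast _ p, ← zpow_mul, zpow_eq_zpow_iff_modEq, hxq]
    refine (Int.modEq_iff_dvd.2 ?_).symm
    rw [← mul_sub, Nat.cast_pow, pow_succ]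
    exact hgeom.mul_left j
  rw [mul_comm q, pow_mul, hwp, h.mul_pow_of_mem hw (hM ▸ M.pow_index_mem g), hwm, ← pow_mul,
    mul_comm q]

include hs in
theorem of_index_prime (hexp : ∀ g : G, g ^ (q * p ^ (s + 1)) = 1) : IsCentralPow (q * p) x where
  mul_pow := by
    refine mul_pow_of_index_prime hp hM (fun g a ↦ ?_)
      (fun m hm ↦ h.mul_pow_mul_of_mem hp hodd hs hxq hM hm)
    obtain ⟨j, hj⟩ := h.exists_zpow_eq_pow_mul hp hxq hM (hexp g)
    exact hj ▸ (h.commute_pow_mul hp hodd hxq hM a).zpow_left j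
  exists_zpow_eq g := h.exists_zpow_eq_pow_mul hp hxq hM (hexp g)
  commute := h.commute_pow_mul hp hodd hxq hM

end NormalSubgroup

theorem of_card_eq_prime_pow (hp : p.Prime) (hodd : Odd p) {e f : ℕ} (hfe : f < e)
    (hcard : Nat.card G = p ^ (e + f)) (hx : orderOf x = p ^ e) (hexp : ∀ g : G, g ^ p ^ e = 1) :
    IsCentralPow (p ^ f) x := by
  have := Fact.mk hp
  have hfin : Finite G := Nat.finite_of_card_ne_zero (hcard ▸ pow_ne_zero _ hp.ne_zero)
  induction f generalizing G with
  | zero =>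
    have htop : Subgroup.zpowers x = ⊤ :=
      Subgroup.eq_top_of_card_eq _ (by rw [Nat.card_zpowers, hx, hcard, add_zero])
    simpa using isCentralPow_one (Subgroup.eq_top_iff' _ |>.1 htop)
  | succ f ih =>
    obtain ⟨M, hMcard, hxM⟩ := Sylow.exists_subgroup_card_pow_prime_le p (m := e + f)
      (hcard ▸ pow_dvd_pow p (by lia)) (Subgroup.zpowers x)
      (by rw [Nat.card_zpowers, hx]) (by lia)
    have hxM : x ∈ M := hxM (Subgroup.mem_zpowers x)
    have hM : M.index = p := by
      refine Nat.eq_of_mul_eq_mul_left (pow_pos hp.pos (e + f)) ?_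
      rw [← hMcard, M.card_mul_index, hcard, hMcard, ← pow_succ, add_assoc]
    have hMnormal : M.Normal := M.normal_of_index_eq_minFac_card <| by
      rw [hM, hcard, hp.pow_minFac (by lia)]
    have hpowM : IsCentralPow (p ^ f) (⟨x, hxM⟩ : M) :=
      ih (by lia) hMcard (by rwa [Subgroup.orderOf_mk]) (fun g ↦ Subtype.ext (hexp g)) inferInstance
    obtain ⟨s, rfl⟩ : ∃ s, e = f + (s + 1) := ⟨e - (f + 1), by lia⟩
    have hxq : orderOf (x ^ p ^ f) = p ^ (s + 1) := by
      rw [orderOf_pow_of_dvd (pow_ne_zero _ hp.ne_zero) (hx ▸ pow_dvd_pow p (by lia)), hx,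
        Nat.pow_div (by lia) hp.pos, Nat.add_sub_cancel_left]
    simp only [pow_add p f] at hexp
    rw [pow_succ]
    exact hpowM.of_index_prime hp hodd (by lia) hxq hM hexp

end IsCentralPow

section CyclicExtension

open SemidirectProduct

/-- The semidirect product of `K` with the infinite cyclic group whose generator acts by `α`. -/
abbrev IntSemidirect {K : Type*} [Group K] (α : MulAut K) : Type _ :=
  K ⋊[zpowersHom (MulAut K) α] Multiplicative ℤ

/-- Hölder's description of an extension `G` of `K` by a cyclic group of order `N`: `ι` embeds `K`
in `G`, the element `x` acts on `K` as `α`, its image generates `G ⧸ K`, and `x ^ N = t`. -/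
structure IsCyclicExtension {K G : Type*} [Group K] [Group G] (N : ℕ) (α : MulAut K) (t : K)
    (x : G) (ι : K →* G) : Prop where
  injective : Function.Injective ι
  semiconjBy : ∀ k, SemiconjBy x (ι k) (ι (α k))
  pow_eq : x ^ N = ι t
  exists_eq_mul_zpow : ∀ g, ∃ (k : K) (j : ℤ), g = ι k * x ^ j
  dvd_of_zpow_eq : ∀ (j : ℤ) (k : K), x ^ j = ι k → (N : ℤ) ∣ j

namespace IsCyclicExtension

variable {K L G H : Type*} [Group K] [Group L] [Group G] [Group H] {N : ℕ} {α : MulAut K}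
  {β : MulAut L} {t : K} {s : L} {x : G} {y : H} {ι : K →* G} {κ : L →* H}

theorem semiconjBy_zpow (h : IsCyclicExtension N α t x ι) (j : ℤ) (k : K) :
    SemiconjBy (x ^ j) (ι k) (ι ((α ^ j) k)) := by
  have hnat (n : ℕ) : ∀ k, SemiconjBy (x ^ n) (ι k) (ι ((α ^ n) k)) := by
    induction n with
    | zero => simp
    | succ n ih =>
      intro k
      rw [pow_succ', pow_succ', MulAut.mul_apply]
      exact (h.semiconjBy _).mul_left (ih k)
  obtain ⟨n, rfl | rfl⟩ := j.eq_nat_or_neg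
  · simpa using hnat n k
  · simpa using (hnat n ((α ^ n)⁻¹ k)).inv_symm_left

theorem map_eq (h : IsCyclicExtension N α t x ι) : α t = t := by
  refine h.injective (mul_right_cancel (b := x) ?_)
  rw [← (h.semiconjBy t).eq, ← h.pow_eq, (Commute.self_pow x N).eq]

theorem zpow_mul_natCast (h : IsCyclicExtension N α t x ι) (c : ℤ) : x ^ (N * c) = ι (t ^ c) := by
  rw [zpow_mul, zpow_natCast, h.pow_eq, map_zpow]

theorem orderOf_eq (h : IsCyclicExtension N α t x ι) (hN : N ≠ 0) :
    orderOf x = N * orderOf t := by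
  have hN' : N ∣ orderOf x := by
    exact_mod_cast h.dvd_of_zpow_eq (orderOf x) 1 <| by
      rw [zpow_natCast, pow_orderOf_eq_one, map_one]
  rw [← orderOf_injective ι h.injective, ← h.pow_eq, orderOf_pow_of_dvd hN hN',
    Nat.mul_div_cancel' hN']

theorem bijective_mul_pow (h : IsCyclicExtension N α t x ι) (hN : N ≠ 0) :
    Function.Bijective fun a : K × Fin N ↦ ι a.1 * x ^ (a.2 : ℕ) := by
  constructor
  · rintro ⟨k, i⟩ ⟨l, j⟩ (hij : ι k * x ^ (i : ℕ) = ι l * x ^ (j : ℕ))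
    have hdvd : (N : ℤ) ∣ j - i := by
      refine h.dvd_of_zpow_eq _ (l⁻¹ * k) ?_
      rw [map_mul, map_inv, zpow_sub, zpow_natCast, zpow_natCast, mul_inv_eq_iff_eq_mul, mul_assoc,
        hij, inv_mul_cancel_left]
    obtain rfl : i = j := Fin.ext <|
      Nat.ModEq.eq_of_lt_of_lt (Int.natCast_modEq_iff.1 (Int.modEq_iff_dvd.2 hdvd)) i.2 j.2
    rw [h.injective (mul_right_cancel hij)]
  · intro g
    have hN' : (N : ℤ) ≠ 0 := Int.natCast_ne_zero.2 hN
    obtain ⟨k, j, rfl⟩ := h.exists_eq_mul_zpow g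
    obtain ⟨i, hi⟩ := Int.eq_ofNat_of_zero_le (Int.emod_nonneg j hN')
    have hiN : i < N := by exact_mod_cast hi ▸ Int.emod_lt_of_pos j (by lia)
    refine ⟨⟨k * t ^ (j / N), i, hiN⟩, ?_⟩
    dsimp only
    rw [map_mul, mul_assoc, ← h.zpow_mul_natCast, ← zpow_natCast, ← hi, ← zpow_add,
      Int.mul_ediv_add_emod]

theorem card_eq (h : IsCyclicExtension N α t x ι) (hN : N ≠ 0) :
    Nat.card G = Nat.card K * N := by
  rw [← Nat.card_eq_of_bijective _ (h.bijective_mul_pow hN), Nat.card_prod, Nat.card_fin]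

theorem map (h : IsCyclicExtension N α t x ι) (φ : G ≃* H) :
    IsCyclicExtension N α t (φ x) (φ.toMonoidHom.comp ι) where
  injective := φ.injective.comp h.injective
  semiconjBy k := (h.semiconjBy k).map φ
  pow_eq := by simp [← map_pow, h.pow_eq]
  exists_eq_mul_zpow g := by
    obtain ⟨k, j, hg⟩ := h.exists_eq_mul_zpow (φ.symm g)
    exact ⟨k, j, by simp [← map_zpow, ← map_mul, ← hg]⟩
  dvd_of_zpow_eq j k hjk := h.dvd_of_zpow_eq j k (φ.injective (by simpa using hjk))

/-- The canonical presentation of a cyclic extension as a quotient of `K ⋊ ℤ`. -/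
def lift (h : IsCyclicExtension N α t x ι) : IntSemidirect α →* G :=
  SemidirectProduct.lift ι (zpowersHom G x) fun g ↦ by
    ext k
    have hconj := (h.semiconjBy_zpow g.toAdd k).eq.symm
    simpa [← map_zpow, eq_mul_inv_iff_mul_eq] using hconj

theorem lift_apply (h : IsCyclicExtension N α t x ι) (γ : IntSemidirect α) :
    h.lift γ = ι γ.left * x ^ γ.right.toAdd := rfl

theorem lift_surjective (h : IsCyclicExtension N α t x ι) : Function.Surjective h.lift := fun g ↦ by
  obtain ⟨k, j, rfl⟩ := h.exists_eq_mul_zpow g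
  exact ⟨⟨k, .ofAdd j⟩, rfl⟩

theorem mem_ker_lift (h : IsCyclicExtension N α t x ι) {γ : IntSemidirect α} :
    γ ∈ h.lift.ker ↔ ∃ c : ℤ, γ.right.toAdd = N * c ∧ γ.left = t ^ (-c) := by
  rw [MonoidHom.mem_ker, lift_apply]
  constructor
  · intro hγ
    obtain ⟨c, hc⟩ := h.dvd_of_zpow_eq γ.right.toAdd γ.left⁻¹ <| by
      rw [map_inv, ← mul_eq_one_iff_inv_eq.1 hγ]
    refine ⟨c, hc, h.injective ?_⟩
    rw [hc, h.zpow_mul_natCast] at hγ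
    rw [zpow_neg, map_inv, eq_inv_of_mul_eq_one_left hγ]
  · rintro ⟨c, hr, hl⟩
    rw [hr, hl, h.zpow_mul_natCast, ← map_mul, zpow_neg, inv_mul_cancel, map_one]

/-- A cyclic extension is determined up to isomorphism by `N`, `α` and `t`. -/
noncomputable def mulEquiv {z : H} {ζ : K →* H} (h : IsCyclicExtension N α t x ι)
    (h' : IsCyclicExtension N α t z ζ) : G ≃* H :=
  (QuotientGroup.quotientKerEquivOfSurjective h.lift h.lift_surjective).symm.trans <|
    (QuotientGroup.quotientMulEquivOfEq (by ext; rw [h.mem_ker_lift, h'.mem_ker_lift])).trans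
      (QuotientGroup.quotientKerEquivOfSurjective h'.lift h'.lift_surjective)

theorem mul_zpow_zpow (h : IsCyclicExtension N α t x ι) (k : K) (j m : ℤ) :
    (ι k * x ^ j) ^ m = ι ((⟨k, .ofAdd j⟩ : IntSemidirect α) ^ m).left * x ^ (j * m) := by
  let γ : IntSemidirect α := ⟨k, .ofAdd j⟩
  have hright : (γ ^ m).right.toAdd = j * m := by
    change (rightHom (γ ^ m)).toAdd = _
    rw [map_zpow, toAdd_zpow, smul_eq_mul, mul_comm]
    rfl
  change h.lift γ ^ m = _
  rw [← map_zpow, lift_apply, hright]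

theorem isCoprime_of_eq_mul_zpow (h : IsCyclicExtension N α t x ι) {z : G} {k l : K} {i j : ℤ}
    (hz : z = ι l * x ^ j) (hx : x = ι k * z ^ i) : IsCoprime j N := by
  obtain ⟨m, hm⟩ : ∃ m, z ^ i = ι m * x ^ (j * i) := ⟨_, hz ▸ h.mul_zpow_zpow l j i⟩
  obtain ⟨c, hc⟩ := h.dvd_of_zpow_eq (1 - j * i) (k * m) <| by
    rw [zpow_sub, zpow_one, mul_inv_eq_iff_eq_mul, map_mul, mul_assoc, ← hm, ← hx]
  exact ⟨i, c, by linear_combination -hc⟩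

theorem of_isCoprime (h : IsCyclicExtension N β s y κ) (θ : K ≃* L) {l : L} {j : ℤ}
    (hj : IsCoprime j N) (hα : ∀ k, θ (α k) = l * (β ^ j) (θ k) * l⁻¹)
    (ht : (κ l * y ^ j) ^ N = κ (θ t)) :
    IsCyclicExtension N α t (κ l * y ^ j) (κ.comp θ.toMonoidHom) where
  injective := h.injective.comp θ.injective
  semiconjBy k := by
    have hconj := (h.semiconjBy_zpow j (θ k)).eq
    simp only [SemiconjBy, MonoidHom.comp_apply, MulEquiv.coe_toMonoidHom, hα, map_mul, map_inv,
      mul_assoc, inv_mul_cancel_left, hconj]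
  pow_eq := ht
  exists_eq_mul_zpow g := by
    obtain ⟨k, i, rfl⟩ := h.exists_eq_mul_zpow g
    obtain ⟨a, b, hab⟩ := hj
    obtain ⟨m, hm⟩ : ∃ m, (κ l * y ^ j) ^ (a * i) = κ m * y ^ (j * (a * i)) :=
      ⟨_, h.mul_zpow_zpow l j (a * i)⟩
    refine ⟨θ.symm (k * s ^ (b * i) * m⁻¹), a * i, ?_⟩
    have hi : y ^ i = κ (s ^ (b * i)) * y ^ (j * (a * i)) := by
      rw [← h.zpow_mul_natCast, ← zpow_add]
      congr 1
      linear_combination -i * hab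
    rw [hm, hi]
    simp [mul_assoc]
  dvd_of_zpow_eq i k hik := by
    obtain ⟨m, hm⟩ : ∃ m, (κ l * y ^ j) ^ i = κ m * y ^ (j * i) := ⟨_, h.mul_zpow_zpow l j i⟩
    refine hj.symm.dvd_of_dvd_mul_left (h.dvd_of_zpow_eq (j * i) (m⁻¹ * θ k) ?_)
    rw [map_mul, map_inv, eq_inv_mul_iff_mul_eq, ← hm, hik]
    rfl

end IsCyclicExtension

section Existence

variable {K : Type u} [Group K] {N : ℕ} {α : MulAut K} {t : K}

/-- The element `t⁻¹ * x ^ N` of `K ⋊ ⟨x⟩`, whose normal closure is to be factored out in order to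
impose the relation `x ^ N = t`. -/
def cyclicRelator (N : ℕ) (α : MulAut K) (t : K) : IntSemidirect α :=
  ⟨t⁻¹, .ofAdd N⟩

theorem commute_cyclicRelator (ht : α t = t) (hα : α ^ N = MulAut.conj t) (γ : IntSemidirect α) :
    Commute (cyclicRelator N α t) γ := by
  have htj (j : ℤ) : (α ^ j) t = t := MulAction.mem_stabilizer_iff.1 <|
    zpow_mem (K := MulAction.stabilizer (MulAut K) t) ht j
  ext <;> simp [cyclicRelator, hα, htj, mul_assoc, mul_comm γ.right]

theorem cyclicRelator_zpow (hα : α ^ N = MulAut.conj t) (a : ℤ) :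
    cyclicRelator N α t ^ a = ⟨t ^ (-a), .ofAdd (N * a)⟩ := by
  have hcomm : Commute (inl t⁻¹ : IntSemidirect α) (inr (.ofAdd N)) := by
    ext <;> simp [hα]
  rw [cyclicRelator, mk_eq_inl_mul_inr, hcomm.mul_zpow, ← map_zpow, ← map_zpow, inv_zpow',
    mk_eq_inl_mul_inr, ← ofAdd_zsmul, smul_eq_mul, mul_comm a]

theorem mem_zpowers_cyclicRelator (hα : α ^ N = MulAut.conj t) {k : K} {j : ℤ} :
    (⟨k, .ofAdd j⟩ : IntSemidirect α) ∈ Subgroup.zpowers (cyclicRelator N α t) ↔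
      ∃ a : ℤ, k = t ^ (-a) ∧ j = N * a := by
  refine Subgroup.mem_zpowers_iff.trans (exists_congr fun a ↦ ?_)
  rw [cyclicRelator_zpow hα, eq_comm, SemidirectProduct.ext_iff,
    Multiplicative.ofAdd.apply_eq_iff_eq]

theorem exists_isCyclicExtension (hN : N ≠ 0) (ht : α t = t) (hα : α ^ N = MulAut.conj t) :
    ∃ (G : Type u) (_ : Group G) (x : G) (ι : K →* G), IsCyclicExtension N α t x ι := by
  let C := Subgroup.zpowers (cyclicRelator N α t)
  have hC : C.Normal := ⟨fun c hc γ ↦ by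
    obtain ⟨a, rfl⟩ := Subgroup.mem_zpowers_iff.1 hc
    rwa [← ((commute_cyclicRelator ht hα γ).zpow_left a).eq, mul_inv_cancel_right]⟩
  let π : IntSemidirect α →* IntSemidirect α ⧸ C := QuotientGroup.mk' C
  let x := π (inr (.ofAdd 1))
  have π_mk (k : K) (j : ℤ) : π ⟨k, .ofAdd j⟩ = π (inl k) * x ^ j := by
    rw [mk_eq_inl_mul_inr, map_mul, ← map_zpow, ← map_zpow, ← ofAdd_zsmul, smul_eq_mul, mul_one]
  have mul_zpow_eq_one (k : K) (j : ℤ) :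
      π (inl k) * x ^ j = 1 ↔ ∃ a : ℤ, k = t ^ (-a) ∧ j = N * a := by
    rw [← π_mk, ← mem_zpowers_cyclicRelator hα]
    exact QuotientGroup.eq_one_iff _
  refine ⟨IntSemidirect α ⧸ C, inferInstance, x, π.comp inl,
    ⟨?_, fun k ↦ ?_, ?_, fun g ↦ ?_, fun j k hjk ↦ ?_⟩⟩
  · refine (injective_iff_map_eq_one _).2 fun k hk ↦ ?_
    obtain ⟨a, rfl, ha⟩ := (mul_zpow_eq_one k 0).1 (by rwa [zpow_zero, mul_one])
    obtain rfl : a = 0 := by simpa [hN] using ha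
    simp
  · refine SemiconjBy.map (?_ : SemiconjBy (inr (.ofAdd 1) : IntSemidirect α) (inl k) (inl (α k))) π
    ext <;> simp
  · have hrel := (mul_zpow_eq_one t⁻¹ N).2 ⟨1, by simp, by simp⟩
    rwa [map_inv, map_inv, inv_mul_eq_one, zpow_natCast, eq_comm] at hrel
  · obtain ⟨⟨k, j⟩, rfl⟩ := QuotientGroup.mk'_surjective C g
    exact ⟨k, j.toAdd, π_mk k j.toAdd⟩
  · obtain ⟨a, -, ha⟩ := (mul_zpow_eq_one k⁻¹ j).1 <| by
      rw [hjk, map_inv, map_inv, MonoidHom.comp_apply, inv_mul_cancel]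
    exact ⟨a, ha⟩

end Existence

section PowDatum

variable {K : Type u} {G : Type v} {L H : Type*} [Group K] [Group L] [Group G] [Group H] {q N : ℕ}
  {α : MulAut K} {β : MulAut L} {t : K} {s : L} {x : G} {y : H} {ι : K →* G} {κ : L →* H}

/-- The data `(K, α, t)` whose extension by a cyclic group of order divisible by `q` has `K` as the
kernel of its `q`-th power map. The condition `left_pow_eq_one` says that `(k * x ^ j) ^ q` equals
`x ^ (j * q)` in `K ⋊ ⟨x⟩`. -/
structure IsPowDatum (q : ℕ) (α : MulAut K) (t : K) : Prop where
  left_pow_eq_one : ∀ γ : IntSemidirect α, (γ ^ q).left = 1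
  orderOf_eq : orderOf t = q
  commute : ∀ k, Commute t k
  map_eq : α t = t

/-- Isomorphism of the extensions of two data by a cyclic group of order `N`, in terms of the data:
`θ` is its restriction to the kernels, and `x` is sent to `l * y ^ j`. -/
def DatumEquiv (N : ℕ) (α : MulAut K) (t : K) (β : MulAut L) (s : L) : Prop :=
  ∃ (θ : K ≃* L) (l : L) (j : ℤ), IsCoprime j N ∧
    (∀ k, θ (α k) = l * (β ^ j) (θ k) * l⁻¹) ∧ θ t = s ^ j

theorem datumEquiv_prime_pow_iff {p a b : ℕ} (ha : 0 < a) (hb : 0 < b) :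
    DatumEquiv (p ^ a) α t β s ↔ DatumEquiv (p ^ b) α t β s := by
  simp only [DatumEquiv, Nat.cast_pow, IsCoprime.pow_right_iff ha, IsCoprime.pow_right_iff hb]

namespace IsPowDatum

theorem aut_pow_eq_one (hd : IsPowDatum q α t) : α ^ q = 1 := by
  ext k
  have hk := hd.left_pow_eq_one (inl k⁻¹ * inr (.ofAdd 1) * (inl k⁻¹)⁻¹)
  rw [conj_pow, ← map_pow, ← ofAdd_nsmul] at hk
  simpa [eq_inv_mul_iff_mul_eq, eq_comm] using hk

theorem exists_isCyclicExtension (hd : IsPowDatum q α t) (hN : N ≠ 0) (hqN : q ∣ N) :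
    ∃ (G : Type u) (_ : Group G) (x : G) (ι : K →* G), IsCyclicExtension N α t x ι := by
  refine _root_.exists_isCyclicExtension hN hd.map_eq ?_
  obtain ⟨c, rfl⟩ := hqN
  ext k
  simp [pow_mul, hd.aut_pow_eq_one, (hd.commute k).eq]

end IsPowDatum

theorem exists_mulEquiv_of_range_eq {ι : K →* H} {κ : L →* H} (hι : Function.Injective ι)
    (hκ : Function.Injective κ) (hικ : ι.range = κ.range) :
    ∃ θ : K ≃* L, ∀ k, κ (θ k) = ι k := by
  refine ⟨(MonoidHom.ofInjective hι).trans <| (MulEquiv.subgroupCongr hικ).trans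
    (MonoidHom.ofInjective hκ).symm, fun k ↦ ?_⟩
  simp [MonoidHom.ofInjective_apply]

namespace IsCyclicExtension

theorem left_pow_eq_one_iff (h : IsCyclicExtension N α t x ι) (k : K) (j : ℤ) :
    ((⟨k, .ofAdd j⟩ : IntSemidirect α) ^ q).left = 1 ↔ (ι k * x ^ j) ^ q = x ^ (j * q) := by
  rw [← zpow_natCast, ← zpow_natCast, h.mul_zpow_zpow, mul_eq_right, map_eq_one_iff ι h.injective]

variable (h : IsCyclicExtension N α t x ι) (hd : IsPowDatum q α t)
include h hd

theorem mul_zpow_pow (k : K) (j : ℤ) : (ι k * x ^ j) ^ q = x ^ (j * q) :=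
  (h.left_pow_eq_one_iff k j).1 (hd.left_pow_eq_one _)

theorem mul_zpow_pow_of_dvd {m : ℕ} (hqm : q ∣ m) (k : K) (j : ℤ) :
    (ι k * x ^ j) ^ m = x ^ (j * m) := by
  obtain ⟨c, rfl⟩ := hqm
  rw [pow_mul, h.mul_zpow_pow hd, ← zpow_natCast, ← zpow_mul, Nat.cast_mul, mul_assoc]

theorem mem_range_iff (hN : N ≠ 0) (hq : q ≠ 0) {g : G} : g ∈ ι.range ↔ g ^ q = 1 := by
  constructor
  · rintro ⟨k, rfl⟩
    simpa using h.mul_zpow_pow hd k 0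
  · intro hg
    obtain ⟨k, j, rfl⟩ := h.exists_eq_mul_zpow g
    rw [h.mul_zpow_pow hd, ← orderOf_dvd_iff_zpow_eq_one, h.orderOf_eq hN, hd.orderOf_eq,
      Nat.cast_mul] at hg
    obtain ⟨c, rfl⟩ := Int.dvd_of_mul_dvd_mul_right (Int.natCast_ne_zero.2 hq) hg
    exact ⟨k * t ^ c, by rw [map_mul, h.zpow_mul_natCast]⟩

theorem exponent_eq (hN : N ≠ 0) : Monoid.exponent G = N * q := by
  refine Nat.dvd_antisymm (Monoid.exponent_dvd_of_forall_pow_eq_one fun g ↦ ?_) ?_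
  · obtain ⟨k, j, rfl⟩ := h.exists_eq_mul_zpow g
    rw [h.mul_zpow_pow_of_dvd hd (dvd_mul_left q N), ← hd.orderOf_eq, ← h.orderOf_eq hN,
      mul_comm, zpow_mul, zpow_natCast, pow_orderOf_eq_one, one_zpow]
  · rw [← hd.orderOf_eq, ← h.orderOf_eq hN]
    exact Monoid.order_dvd_exponent x

theorem datumEquiv_of_range_eq {z : G} {ζ : L →* G} (h' : IsCyclicExtension N β s z ζ)
    (hqN : q ∣ N) (hr : ζ.range = ι.range) : DatumEquiv N β s α t := by
  obtain ⟨θ, hθ⟩ := exists_mulEquiv_of_range_eq h'.injective h.injective hr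
  obtain ⟨l, j, hz⟩ := h.exists_eq_mul_zpow z
  obtain ⟨k, i, hx⟩ := h'.exists_eq_mul_zpow x
  refine ⟨θ, l, j, h.isCoprime_of_eq_mul_zpow hz (hθ k ▸ hx), fun m ↦ h.injective ?_,
    h.injective ?_⟩
  · have hconj := eq_mul_inv_of_mul_eq (h'.semiconjBy m).eq.symm
    have hconj' := eq_mul_inv_of_mul_eq (h.semiconjBy_zpow j (θ m)).eq.symm
    rw [hθ, map_mul, map_mul, map_inv, hconj, hconj', hz, hθ]
    group
  · rw [hθ, ← h'.pow_eq, hz, h.mul_zpow_pow_of_dvd hd hqN, mul_comm, h.zpow_mul_natCast]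

omit hd in
theorem nonempty_mulEquiv_iff (h' : IsCyclicExtension N β s y κ) (hd : IsPowDatum q α t)
    (hd' : IsPowDatum q β s) (hN : N ≠ 0) (hq : q ≠ 0) (hqN : q ∣ N) :
    Nonempty (G ≃* H) ↔ DatumEquiv N α t β s := by
  constructor
  · rintro ⟨φ⟩
    refine h'.datumEquiv_of_range_eq hd' (h.map φ) hqN ?_
    ext g
    rw [(h.map φ).mem_range_iff hd hN hq, h'.mem_range_iff hd' hN hq]
  · rintro ⟨θ, l, j, hj, hα, ht⟩
    refine ⟨h.mulEquiv (h'.of_isCoprime θ (l := l) hj hα ?_)⟩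
    rw [h'.mul_zpow_pow_of_dvd hd' hqN, mul_comm, h'.zpow_mul_natCast, ht]

end IsCyclicExtension

namespace IsCentralPow

/-- The `q`-th power map as a homomorphism. -/
def powHom (h : IsCentralPow q x) : G →* G :=
  MonoidHom.mk' (· ^ q) h.mul_pow

theorem mem_ker_powHom (h : IsCentralPow q x) {g : G} : g ∈ h.powHom.ker ↔ g ^ q = 1 :=
  Iff.rfl

theorem isCyclicExtension_ker_powHom (h : IsCentralPow q x) (hq : q ≠ 0)
    (hx : orderOf x = N * q) :
    IsCyclicExtension N (MulAut.conjNormal x)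
      ⟨x ^ N, h.mem_ker_powHom.2 (by rw [← pow_mul, ← hx, pow_orderOf_eq_one])⟩ x
      h.powHom.ker.subtype where
  injective := h.powHom.ker.subtype_injective
  semiconjBy k := by simp [SemiconjBy]
  pow_eq := rfl
  exists_eq_mul_zpow g := by
    obtain ⟨j, hj⟩ := h.exists_zpow_eq g
    refine ⟨⟨g * (x ^ j)⁻¹, h.mem_ker_powHom.2 ?_⟩, j, by simp⟩
    rw [h.mul_pow, ← hj, inv_pow, ← zpow_natCast (x ^ j), ← zpow_mul', zpow_mul, zpow_natCast,
      mul_inv_cancel]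
  dvd_of_zpow_eq j k hjk := by
    have hk : x ^ (j * q) = 1 := by
      rw [zpow_mul, zpow_natCast, hjk]
      exact h.mem_ker_powHom.1 k.2
    rw [← orderOf_dvd_iff_zpow_eq_one, hx, Nat.cast_mul] at hk
    exact Int.dvd_of_mul_dvd_mul_right (Int.natCast_ne_zero.2 hq) hk

theorem isPowDatum (h : IsCentralPow q x) (hext : IsCyclicExtension N α t x ι)
    (hι : ∀ k, ι k ^ q = 1) (hN : N ≠ 0) (hqN : q ∣ N) (hx : orderOf x = N * q) :
    IsPowDatum q α t where
  left_pow_eq_one γ := (hext.left_pow_eq_one_iff γ.left γ.right.toAdd).2 <| by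
    rw [h.mul_pow, hι, one_mul, zpow_mul, zpow_natCast]
  orderOf_eq := Nat.eq_of_mul_eq_mul_left (Nat.pos_of_ne_zero hN) (by rw [← hext.orderOf_eq hN, hx])
  commute k := by
    obtain ⟨c, rfl⟩ := hqN
    have hcomm := (h.commute (ι k)).pow_left c
    rw [← pow_mul, hext.pow_eq] at hcomm
    exact hcomm.of_map hext.injective
  map_eq := hext.map_eq

theorem exists_isCyclicExtension (h : IsCentralPow q x) (hN : N ≠ 0) (hq : q ≠ 0) (hqN : q ∣ N)
    (hx : orderOf x = N * q) :
    ∃ (K : Type v) (_ : Group K) (α : MulAut K) (t : K) (ι : K →* G),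
      IsPowDatum q α t ∧ IsCyclicExtension N α t x ι :=
  have hext := h.isCyclicExtension_ker_powHom hq hx
  ⟨_, _, _, _, _, h.isPowDatum hext (fun k ↦ h.mem_ker_powHom.1 k.2) hN hqN hx, hext⟩

end IsCentralPow

/-- `G` and `G'` arise from the same data `(K, α, t)`, as extensions by cyclic groups of orders `N`
and `N'`. -/
def SharesPowDatum (q N N' : ℕ) (G G' : Type u) [Group G] [Group G'] : Prop :=
  ∃ (K : Type u) (_ : Group K) (α : MulAut K) (t : K) (x : G) (ι : K →* G) (x' : G') (ι' : K →* G'),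
    IsPowDatum q α t ∧ IsCyclicExtension N α t x ι ∧ IsCyclicExtension N' α t x' ι'

namespace SharesPowDatum

variable {G G' H H' : Type u} {_ : Group G} {_ : Group G'} {_ : Group H} {_ : Group H'}

theorem symm {N' : ℕ} (h : SharesPowDatum q N N' G G') : SharesPowDatum q N' N G' G := by
  obtain ⟨K, _, α, t, x, ι, x', ι', hd, hx, hx'⟩ := h
  exact ⟨K, _, α, t, x', ι', x, ι, hd, hx', hx⟩

theorem nonempty_mulEquiv_iff {p f a b : ℕ} (hp : p ≠ 0) (hf : 0 < f) (ha : f ≤ a) (hb : f ≤ b)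
    (hG : SharesPowDatum (p ^ f) (p ^ a) (p ^ b) G G')
    (hH : SharesPowDatum (p ^ f) (p ^ a) (p ^ b) H H') :
    Nonempty (G ≃* H) ↔ Nonempty (G' ≃* H') := by
  obtain ⟨K, _, α, t, x, ι, x', ι', hd, hx, hx'⟩ := hG
  obtain ⟨L, _, β, s, y, κ, y', κ', hd', hy, hy'⟩ := hH
  rw [hx.nonempty_mulEquiv_iff hy hd hd' (pow_ne_zero a hp) (pow_ne_zero f hp) (pow_dvd_pow p ha),
    hx'.nonempty_mulEquiv_iff hy' hd hd' (pow_ne_zero b hp) (pow_ne_zero f hp) (pow_dvd_pow p hb),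
    datumEquiv_prime_pow_iff (hf.trans_le ha) (hf.trans_le hb)]

end SharesPowDatum

end PowDatum

end CyclicExtension

section PrimePower

variable {p f a b : ℕ} {G : Type u} [Group G]

theorem exists_isCyclicExtension_of_card_eq_prime_pow (hp : p.Prime) (hodd : Odd p) (hf : 0 < f)
    (ha : f ≤ a) (hcard : Nat.card G = p ^ (a + f + f)) (hexp : Monoid.exponent G = p ^ (a + f)) :
    ∃ (K : Type u) (_ : Group K) (α : MulAut K) (t : K) (x : G) (ι : K →* G),
      IsPowDatum (p ^ f) α t ∧ IsCyclicExtension (p ^ a) α t x ι := by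
  obtain ⟨x, hx⟩ : ∃ x : G, orderOf x = p ^ (a + f) := by
    simpa [hexp, hp.factorization_self] using hp.exists_orderOf_eq_pow_factorization_exponent G
  have hx_pow : IsCentralPow (p ^ f) x := .of_card_eq_prime_pow hp hodd (by lia) hcard hx
    fun g ↦ hexp ▸ Monoid.pow_exponent_eq_one g
  obtain ⟨K, _, α, t, ι, hd, hext⟩ := hx_pow.exists_isCyclicExtension (pow_ne_zero a hp.ne_zero)
    (pow_ne_zero f hp.ne_zero) (pow_dvd_pow p ha) (by rw [hx, pow_add])
  exact ⟨K, _, α, t, x, ι, hd, hext⟩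

theorem exists_sharesPowDatum (hp : p.Prime) (hodd : Odd p) (hf : 0 < f) (ha : f ≤ a) (hb : f ≤ b)
    (hcard : Nat.card G = p ^ (a + f + f)) (hexp : Monoid.exponent G = p ^ (a + f)) {T : Type u}
    (hT : Nat.card T = p ^ (b + f + f)) :
    ∃ _ : Group T, Monoid.exponent T = p ^ (b + f) ∧
      SharesPowDatum (p ^ f) (p ^ a) (p ^ b) G T := by
  obtain ⟨K, _, α, t, x, ι, hd, hx⟩ :=
    exists_isCyclicExtension_of_card_eq_prime_pow hp hodd hf ha hcard hexp
  have hpb : p ^ b ≠ 0 := pow_ne_zero b hp.ne_zero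
  obtain ⟨G', _, x', ι', hx'⟩ := hd.exists_isCyclicExtension hpb (pow_dvd_pow p hb)
  have hK : Nat.card K = p ^ (f + f) := by
    refine Nat.eq_of_mul_eq_mul_right (pow_pos hp.pos a) ?_
    rw [← hx.card_eq (pow_ne_zero a hp.ne_zero), hcard]
    ring
  have hG' : Nat.card T = Nat.card G' := by
    rw [hT, hx'.card_eq hpb, hK]
    ring
  have : Finite T := Nat.finite_of_card_ne_zero (hT ▸ pow_ne_zero _ hp.ne_zero)
  have : Finite G' := Nat.finite_of_card_ne_zero (hG' ▸ hT ▸ pow_ne_zero _ hp.ne_zero)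
  obtain ⟨E⟩ : Nonempty (T ≃ G') := Finite.card_eq.1 hG'
  let groupT : Group T := E.group
  have hTx := hx'.map (Equiv.mulEquiv E).symm
  refine ⟨groupT, ?_, K, _, α, t, x, ι, _, _, hd, hx, hTx⟩
  rw [hTx.exponent_eq hd hpb, pow_add]

end PrimePower

section Counting

theorem card_quot_congr {A B : Type*} {r : A → A → Prop} {r' : B → B → Prop} (hr : ∀ a, r a a)
    (hr' : Equivalence r') (R : A → B → Prop) (hleft : ∀ a, ∃ b, R a b) (hright : ∀ b, ∃ a, R a b)
    (hR : ∀ {a b c d}, R a b → R c d → (r a c ↔ r' b d)) :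
    Nat.card (Quot r) = Nat.card (Quot r') := by
  choose F hF using hleft
  let Φ : Quot r → Quot r' := Quot.map F fun a c ↦ (hR (hF a) (hF c)).1
  refine Nat.card_eq_of_bijective Φ ⟨?_, ?_⟩
  · rintro ⟨a⟩ ⟨c⟩ h
    exact Quot.sound ((hR (hF a) (hF c)).2 (hr'.eqvGen_iff.1 (Quot.eqvGen_exact h)))
  · rintro ⟨b⟩
    obtain ⟨a, ha⟩ := hright b
    exact ⟨Quot.mk r a, Quot.sound ((hR (hF a) ha).1 (hr a))⟩

theorem equivalence_nonempty_mulEquiv {G : Type} (Q : Group G → Prop) :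
    Equivalence fun s t : {s : Group G // Q s} ↦
      Nonempty (@MulEquiv G G (mulOfGroup G s.1) (mulOfGroup G t.1)) where
  refl s := ⟨@MulEquiv.refl G (mulOfGroup G s.1)⟩
  symm := fun ⟨φ⟩ ↦ ⟨@MulEquiv.symm G G (mulOfGroup G _) (mulOfGroup G _) φ⟩
  trans := fun ⟨φ⟩ ⟨ψ⟩ ↦
    ⟨@MulEquiv.trans G G G (mulOfGroup G _) (mulOfGroup G _) (mulOfGroup G _) φ ψ⟩

theorem groupClassCount_congr {N N' : ℕ} {Q : Group (Fin N) → Prop} {Q' : Group (Fin N') → Prop}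
    (R : Group (Fin N) → Group (Fin N') → Prop) (hleft : ∀ s, Q s → ∃ s', Q' s' ∧ R s s')
    (hright : ∀ s', Q' s' → ∃ s, Q s ∧ R s s')
    (hR : ∀ {s s' t t'}, R s s' → R t t' →
      (Nonempty (@MulEquiv (Fin N) (Fin N) (mulOfGroup _ s) (mulOfGroup _ t)) ↔
        Nonempty (@MulEquiv (Fin N') (Fin N') (mulOfGroup _ s') (mulOfGroup _ t')))) :
    groupClassCount N Q = groupClassCount N' Q' := by
  refine card_quot_congr (equivalence_nonempty_mulEquiv Q).refl (equivalence_nonempty_mulEquiv Q')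
    (fun s s' ↦ R s.1 s'.1) (fun s ↦ ?_) (fun s' ↦ ?_) hR
  · obtain ⟨s', hs', h⟩ := hleft s.1 s.2
    exact ⟨⟨s', hs'⟩, h⟩
  · obtain ⟨s, hs, h⟩ := hright s'.1 s'.2
    exact ⟨⟨s, hs⟩, h⟩

theorem psiCoexp_add {p : ℕ} (e : ℕ) {f : ℕ} (hf : 0 < f) :
    PsiCoexp p (e + f) f = groupClassCount (p ^ (e + f)) fun s ↦
      letI := s
      Monoid.exponent (Fin (p ^ (e + f))) = p ^ e := by
  unfold PsiCoexp
  congr! 3 with s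
  refine ⟨?_, fun h ↦ ⟨e, h, by lia⟩⟩
  rintro ⟨e', h, he'⟩
  obtain rfl : e' = e := by lia
  exact h

end Counting

theorem psi_coexp_stable_general {p f n n' : ℕ} (hp : p.Prime) (hodd : Odd p) (hf : 0 < f)
    (hn : 3 * f ≤ n) (hn' : 3 * f ≤ n') : PsiCoexp p n f = PsiCoexp p n' f := by
  obtain ⟨a, rfl⟩ : ∃ a, n = a + f + f := ⟨n - f - f, by lia⟩
  obtain ⟨b, rfl⟩ : ∃ b, n' = b + f + f := ⟨n' - f - f, by lia⟩
  have ha : f ≤ a := by lia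
  have hb : f ≤ b := by lia
  rw [psiCoexp_add _ hf, psiCoexp_add _ hf]
  refine groupClassCount_congr
    (fun s s' ↦ @SharesPowDatum (p ^ f) (p ^ a) (p ^ b) (Fin _) (Fin _) s s') (fun s hs ↦ ?_)
    (fun s' hs' ↦ ?_) (SharesPowDatum.nonempty_mulEquiv_iff hp.ne_zero hf ha hb)
  · exact exists_sharesPowDatum hp hodd hf ha hb (Nat.card_fin _) hs (Nat.card_fin _)
  · obtain ⟨s, hs, h⟩ :=
      exists_sharesPowDatum hp hodd hf hb ha (Nat.card_fin _) hs' (Nat.card_fin _)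
    exact ⟨s, hs, h.symm⟩

/-- Fix an integer `f ≥ 3`.  For every prime `p > f + 1`,
the number `Ψ_{n,f}^p` of isomorphism classes of groups of order `p ^ n` with
coexponent `f` is independent of `n` for `n ≥ 3f`. -/
theorem psi_coexp_stable (f : ℕ) (hf : 3 ≤ f) (p : ℕ) (hp : p.Prime) (hpf : p > f + 1)
    (n n' : ℕ) (hn : 3 * f ≤ n) (hn' : 3 * f ≤ n') :
    PsiCoexp p n f = PsiCoexp p n' f := by
  exact psi_coexp_stable_general hp (hp.odd_of_ne_two (by lia)) (by lia) hn hn'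
end

section
/- Let P be a finite regular p-group with ω_1(P) ≥ 2, and let (g_1, ..., g_{ω_1(P)}) be a uniqueness basis of P in which g_i has order p^{μ_i(P)}. Then the element g' = g_1^{p^{μ_2(P)}} is central in P, and the quotient P/⟨g'⟩ is a regular p-group of order |P|/p^{μ_1(P)-μ_2(P)}, of exponent p^{μ_2(P)}, with type invariants (μ_2(P), μ_2(P), μ_3(P), ..., μ_{ω_1(P)}(P)), and with the same coexponent as P. -/
/-- `℧_1(H) = ⟨h^p : h ∈ H⟩` for a subgroup `H`. -/
def MhoOne (p : ℕ) {P : Type} [Group P] (H : Subgroup P) : Subgroup P :=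
  Subgroup.closure {y : P | ∃ x ∈ H, y = x ^ p}

/-- A `p`-group `P` is regular if for all `x y : P` there is
`z ∈ ℧_1(γ_2(⟨x,y⟩))` with `x^p * y^p = (x*y)^p * z`. -/
def IsRegularPGroup (p : ℕ) (P : Type) [Group P] : Prop :=
  ∀ x y : P,
    ∃ z ∈ MhoOne p ⁅Subgroup.closure {x, y}, Subgroup.closure {x, y}⁆,
      x ^ p * y ^ p = (x * y) ^ p * z

/-- `Ω_i(P) = ⟨x : x^(p^i) = 1⟩`. -/
def OmegaSubgroup (p : ℕ) (P : Type) [Group P] (i : ℕ) : Subgroup P :=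
  Subgroup.closure {x : P | x ^ p ^ i = 1}

/-- `ω_i(P)`, defined by `p ^ ω_i(P) = |Ω_i(P)/Ω_{i-1}(P)|`. -/
noncomputable def omegaInv (p : ℕ) (P : Type) [Group P] (i : ℕ) : ℕ :=
  ((OmegaSubgroup p P (i - 1)).relIndex (OmegaSubgroup p P i)).factorization p

/-- `μ_j(P)` (for `j ≥ 1`): the dual partition of the partition `(ω_1(P), ω_2(P), ...)`,
i.e. `μ_j(P) = #{i ≥ 1 : ω_i(P) ≥ j}`.  The type invariants of `P` are
`μ_1(P) ≥ μ_2(P) ≥ ... ≥ μ_{ω_1(P)}(P)`. -/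
noncomputable def muInv (p : ℕ) (P : Type) [Group P] (j : ℕ) : ℕ :=
  Nat.card {i : ℕ // 1 ≤ i ∧ j ≤ omegaInv p P i}

/-- A tuple `(g 0, ..., g (r-1))` of non-identity elements of `P` is a uniqueness basis
if every element of `P` is uniquely the ordered product `g 0 ^ k 0 * ... * g (r-1) ^ k (r-1)`
with `0 ≤ k i < orderOf (g i)`. -/
def IsUniquenessBasis {P : Type} [Group P] {r : ℕ} (g : Fin r → P) : Prop :=
  (∀ i, g i ≠ 1) ∧
    ∀ x : P, ∃! k : (i : Fin r) → Fin (orderOf (g i)),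
      x = (((List.finRange r).map fun i => g i ^ ((k i : ℕ))).prod)

/-!
In a regular `p`-group, `x ^ p ^ i = y ^ p ^ i` if and only if `(x⁻¹ * y) ^ p ^ i = 1`. Hence
`Ω_i(P)` is the set of solutions of `x ^ p ^ i = 1`, its index is the number of `p ^ i`-th powers,
and `x ^ p ^ i` commutes with `y` if and only if `x` commutes with `y ^ p ^ i`.

Let `g` have order `exp P = p ^ μ_1(P)` and let `m = μ_2(P)`. As `ω_i(P) = 1` for `m < i ≤ μ_1(P)`,
there are `p ^ (μ_1(P) - m)` elements of the form `x ^ p ^ m`, which is the order of `g ^ p ^ m`: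
all of them are powers of `g ^ p ^ m`. So `g` commutes with all `p ^ m`-th powers, that is,
`g ^ p ^ m` is central. Dividing by a normal subgroup consisting of the `p ^ m`-th powers leaves
`ω_i` unchanged for `i ≤ m` and annihilates it for `i > m`, so it replaces each `μ_j` by
`min m μ_j`.
-/

open scoped commutatorElement

section Group

variable {G : Type*} [Group G]

theorem commutator_closure_pair_le_s5 {N : Subgroup G} [N.Normal] {x y : G} (hxy : ⁅x, y⁆ ∈ N) :
    ⁅Subgroup.closure {x, y}, Subgroup.closure {x, y}⁆ ≤ N := by
  have comm : Commute (x : G ⧸ N) y :=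
    commutatorElement_eq_one_iff_commute.1 ((QuotientGroup.eq_one_iff _).2 hxy)
  rw [← QuotientGroup.ker_mk' N, ← Subgroup.map_eq_bot_iff, Subgroup.map_commutator,
    MonoidHom.map_closure, Set.image_pair, Subgroup.commutator_self_eq_bot_iff]
  refine Subgroup.isMulCommutative_closure ?_
  rintro _ (rfl | rfl) _ (rfl | rfl)
  exacts [rfl, comm, comm.symm, rfl]

theorem exists_normal_card_lt_mem [Finite G] [Group.IsNilpotent G] {x : G}
    (hx : Subgroup.zpowers x ≠ ⊤) :
    ∃ M : Subgroup G, M.Normal ∧ Nat.card M < Nat.card G ∧ x ∈ M := by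
  obtain ⟨M, hM, hxM⟩ := (eq_top_or_exists_le_coatom _).resolve_left hx
  have normal : M.Normal := Subgroup.NormalizerCondition.normal_of_coatom M
    Group.normalizerCondition_of_isNilpotent hM
  exact ⟨M, normal, not_le.1 fun hle ↦ hM.1 (M.eq_top_of_le_card hle),
    hxM (Subgroup.mem_zpowers x)⟩

theorem commute_of_zpowers_eq_top {x : G} (hx : Subgroup.zpowers x = ⊤) (y : G) :
    Commute x y := by
  obtain ⟨k, rfl⟩ : y ∈ Subgroup.zpowers x := hx ▸ Subgroup.mem_top y
  exact (Commute.refl x).zpow_right k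

theorem commutatorElement_mem_of_left_mem {N : Subgroup G} [N.Normal] {x : G} (hx : x ∈ N)
    (y : G) : ⁅x, y⁆ ∈ N :=
  Subgroup.commutator_le_left N ⊤ (Subgroup.commutator_mem_commutator hx (Subgroup.mem_top y))

theorem relIndex_eq_card_image {α : Type*} {f : G → α} {H : Subgroup G}
    (hf : ∀ a b, f a = f b ↔ a⁻¹ * b ∈ H) (K : Subgroup G) :
    H.relIndex K = Nat.card (f '' K) := by
  have fibers (a b : K) : QuotientGroup.leftRel (H.subgroupOf K) a b ↔
      Setoid.ker (f ∘ K.subtype) a b := by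
    rw [QuotientGroup.leftRel_apply, Setoid.ker_def]
    exact (hf a b).symm
  have image_eq : f '' K = Set.range (f ∘ K.subtype) := by
    rw [Set.range_comp, Subgroup.coe_subtype, Subtype.range_coe]
  rw [image_eq]
  exact Nat.card_congr ((Quotient.congrRight fibers).trans (Setoid.quotientKerEquivRange _))

theorem relIndex_mul_card {H K : Subgroup G} (h : H ≤ K) :
    H.relIndex K * Nat.card H = Nat.card K := by
  simpa only [Subgroup.relIndex_bot_left, mul_comm] using
    Subgroup.relIndex_mul_relIndex ⊥ H K bot_le h

end Group

-- Only `f (i + 1)` is assumed antitone because `omegaInv p P 0 = 0` by truncated subtraction.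
theorem le_card_subtype_iff_of_antitone {f : ℕ → ℕ} (hf : Antitone fun i ↦ f (i + 1)) {j : ℕ}
    (hj : ∃ i, f (i + 1) < j) {i : ℕ} (hi : 1 ≤ i) :
    i ≤ Nat.card {i : ℕ // 1 ≤ i ∧ j ≤ f i} ↔ j ≤ f i := by
  have le_apply_iff (k : ℕ) : j ≤ f (k + 1) ↔ k < Nat.find hj := by
    refine ⟨fun hk ↦ ?_, fun hk ↦ not_lt.1 (Nat.find_min hj hk)⟩
    by_contra! hle
    exact (hk.trans (hf hle)).not_gt (Nat.find_spec hj)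
  have mem_Icc_iff (k : ℕ) : k ∈ Finset.Icc 1 (Nat.find hj) ↔ 1 ≤ k ∧ j ≤ f k := by
    rcases k with _ | k
    · simp
    · rw [Finset.mem_Icc, le_apply_iff, Nat.lt_iff_add_one_le]
  rw [Nat.subtype_card _ mem_Icc_iff, Nat.card_Icc, Nat.add_sub_cancel]
  simpa [hi] using mem_Icc_iff i

section OmegaSubgroup

variable {p : ℕ} {P : Type} [Group P]

theorem omegaSubgroup_mono : Monotone (OmegaSubgroup p P) := fun i _ hij ↦
  Subgroup.closure_mono fun x (hx : x ^ p ^ i = 1) ↦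
    orderOf_dvd_iff_pow_eq_one.1 ((orderOf_dvd_of_pow_eq_one hx).trans (pow_dvd_pow p hij))

instance omegaSubgroup_characteristic (i : ℕ) : (OmegaSubgroup p P i).Characteristic := by
  rw [Subgroup.characteristic_iff_map_le]
  intro φ
  rw [OmegaSubgroup, MonoidHom.map_closure]
  refine Subgroup.closure_mono ?_
  rintro _ ⟨x, hx : x ^ p ^ i = 1, rfl⟩
  change φ x ^ p ^ i = 1
  rw [← map_pow, hx, map_one]

theorem mem_omegaSubgroup_iff_of_mul_closed {i : ℕ}
    (hmul : ∀ x y : P, x ^ p ^ i = 1 → y ^ p ^ i = 1 → (x * y) ^ p ^ i = 1) {x : P} :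
    x ∈ OmegaSubgroup p P i ↔ x ^ p ^ i = 1 := by
  refine ⟨fun hx ↦ ?_, fun hx ↦ Subgroup.subset_closure hx⟩
  induction hx using Subgroup.closure_induction with
  | mem _ hx => exact hx
  | one => exact one_pow _
  | mul x y _ _ hx hy => exact hmul x y hx hy
  | inv _ _ hx => rw [inv_pow, hx, inv_one]

theorem omegaSubgroup_eq_top_of_exponent_dvd {i : ℕ} (h : Monoid.exponent P ∣ p ^ i) :
    OmegaSubgroup p P i = ⊤ :=
  (Subgroup.eq_top_iff' _).2 fun x ↦
    Subgroup.subset_closure (Monoid.exponent_dvd_iff_forall_pow_eq_one.1 h x)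

theorem omegaInv_eq_zero_of_exponent_dvd {i j : ℕ} (h : Monoid.exponent P ∣ p ^ i) (hij : i < j) :
    omegaInv p P j = 0 := by
  have htop : OmegaSubgroup p P (j - 1) = ⊤ :=
    omegaSubgroup_eq_top_of_exponent_dvd (h.trans (pow_dvd_pow p (Nat.le_sub_one_of_lt hij)))
  rw [omegaInv, htop, Subgroup.relIndex_top_left, Nat.factorization_one, Finsupp.zero_apply]

theorem omegaInv_eq_factorization_card_div [Finite P] (i : ℕ) :
    omegaInv p P i = (Nat.card (OmegaSubgroup p P i) /
      Nat.card (OmegaSubgroup p P (i - 1))).factorization p := by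
  rw [omegaInv, ← relIndex_mul_card (omegaSubgroup_mono (Nat.sub_le i 1)),
    Nat.mul_div_cancel _ Nat.card_pos]

variable [Finite P] [Fact p.Prime]

theorem relIndex_omegaSubgroup_succ (hP : IsPGroup p P) (i : ℕ) :
    (OmegaSubgroup p P i).relIndex (OmegaSubgroup p P (i + 1)) = p ^ omegaInv p P (i + 1) := by
  obtain ⟨k, hk⟩ : ∃ k, (OmegaSubgroup p P i).relIndex (OmegaSubgroup p P (i + 1)) = p ^ k :=
    (hP.to_subgroup _).index _
  rw [omegaInv, Nat.add_sub_cancel, hk, Nat.factorization_pow_self Fact.out]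

theorem relIndex_omegaSubgroup_add (hP : IsPGroup p P) (i k : ℕ) :
    (OmegaSubgroup p P i).relIndex (OmegaSubgroup p P (i + k)) =
      p ^ ∑ l ∈ Finset.range k, omegaInv p P (i + l + 1) := by
  induction k with
  | zero => simp
  | succ k ih =>
    rw [← add_assoc, ← Subgroup.relIndex_mul_relIndex _ _ _
      (omegaSubgroup_mono (Nat.le_add_right i k)) (omegaSubgroup_mono (Nat.le_succ (i + k))), ih,
      relIndex_omegaSubgroup_succ hP, ← pow_add, Finset.sum_range_succ]

end OmegaSubgroup

namespace IsRegularPGroup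

section Transfer

variable {p : ℕ} {P Q : Type} [Group P] [Group Q]

theorem map_mhoOne (f : P →* Q) (H : Subgroup P) :
    (MhoOne p H).map f = MhoOne p (H.map f) := by
  rw [MhoOne, MonoidHom.map_closure, MhoOne]
  congr 1
  ext y
  constructor
  · rintro ⟨_, ⟨x, hx, rfl⟩, rfl⟩
    exact ⟨f x, Subgroup.mem_map_of_mem f hx, map_pow f x p⟩
  · rintro ⟨_, ⟨x, hx, rfl⟩, rfl⟩
    exact ⟨x ^ p, ⟨x, hx, rfl⟩, map_pow f x p⟩

theorem map_mhoOne_commutator_closure_pair (f : P →* Q) (x y : P) :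
    (MhoOne p ⁅Subgroup.closure {x, y}, Subgroup.closure {x, y}⁆).map f =
      MhoOne p ⁅Subgroup.closure {f x, f y}, Subgroup.closure {f x, f y}⁆ := by
  rw [map_mhoOne, Subgroup.map_commutator, MonoidHom.map_closure, Set.image_pair]

theorem of_injective (hQ : IsRegularPGroup p Q) {f : P →* Q} (hf : Function.Injective f) :
    IsRegularPGroup p P := by
  intro x y
  obtain ⟨z, hz, h⟩ := hQ (f x) (f y)
  rw [← map_mhoOne_commutator_closure_pair] at hz
  obtain ⟨z, hz, rfl⟩ := hz
  exact ⟨z, hz, hf (by simpa only [map_mul, map_pow] using h)⟩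

theorem of_surjective (hP : IsRegularPGroup p P) {f : P →* Q} (hf : Function.Surjective f) :
    IsRegularPGroup p Q := by
  intro x y
  obtain ⟨x, rfl⟩ := hf x
  obtain ⟨y, rfl⟩ := hf y
  obtain ⟨z, hz, h⟩ := hP x y
  refine ⟨f z, ?_, by simpa only [map_mul, map_pow] using congrArg f h⟩
  rw [← map_mhoOne_commutator_closure_pair]
  exact Subgroup.mem_map_of_mem f hz

theorem to_subgroup (hP : IsRegularPGroup p P) (H : Subgroup P) : IsRegularPGroup p H :=
  hP.of_injective H.subtype_injective

theorem to_quotient (hP : IsRegularPGroup p P) (N : Subgroup P) [N.Normal] :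
    IsRegularPGroup p (P ⧸ N) :=
  hP.of_surjective (QuotientGroup.mk'_surjective N)

theorem mul_pow_of_commutatorElement_mem (hP : IsRegularPGroup p P) {N : Subgroup P} [N.Normal]
    (hN : ∀ s ∈ N, s ^ p = 1) {x y : P} (hxy : ⁅x, y⁆ ∈ N) : (x * y) ^ p = x ^ p * y ^ p := by
  obtain ⟨z, hz, h⟩ := hP x y
  have mhoOne_le_bot : MhoOne p ⁅Subgroup.closure {x, y}, Subgroup.closure {x, y}⁆ ≤ ⊥ := by
    rw [MhoOne, Subgroup.closure_le]
    rintro _ ⟨w, hw, rfl⟩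
    exact hN w (commutator_closure_pair_le_s5 hxy hw)
  rw [h, Subgroup.mem_bot.1 (mhoOne_le_bot hz), mul_one]

end Transfer

section PowerStructure

variable {p : ℕ} [Fact p.Prime] {P : Type} [Group P] [Finite P]

theorem mul_pow_eq_one (hreg : IsRegularPGroup p P) (hP : IsPGroup p P) {x y : P}
    (hx : x ^ p = 1) (hy : y ^ p = 1) : (x * y) ^ p = 1 := by
  induction hn : Nat.card P using Nat.strong_induction_on generalizing P with | _ n ih
  have := hP.isNilpotent
  by_cases htop : Subgroup.zpowers x = ⊤
  · rw [(commute_of_zpowers_eq_top htop y).mul_pow, hx, hy, one_mul]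
  obtain ⟨M, _, hMcard, hxM⟩ := exists_normal_card_lt_mem htop
  have mem_omega (s : M) : s ∈ OmegaSubgroup p M 1 ↔ s ^ p ^ 1 = 1 :=
    mem_omegaSubgroup_iff_of_mul_closed <| by
      simpa only [pow_one] using
        fun a b ha hb ↦ ih _ (hn ▸ hMcard) (hreg.to_subgroup M) (hP.to_subgroup M) ha hb rfl
  have pow_eq_one : ∀ s ∈ (OmegaSubgroup p M 1).map M.subtype, s ^ p = 1 := by
    rintro _ ⟨s, hs, rfl⟩
    rw [← map_pow, ← pow_one p, (mem_omega s).1 hs, map_one]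
  have hxS : x ∈ (OmegaSubgroup p M 1).map M.subtype :=
    ⟨⟨x, hxM⟩, (mem_omega _).2 (Subtype.ext (by simpa using hx)), rfl⟩
  rw [hreg.mul_pow_of_commutatorElement_mem pow_eq_one (commutatorElement_mem_of_left_mem hxS y),
    hx, hy, one_mul]

theorem mem_omegaSubgroup_one (hreg : IsRegularPGroup p P) (hP : IsPGroup p P) {x : P} :
    x ∈ OmegaSubgroup p P 1 ↔ x ^ p = 1 := by
  rw [mem_omegaSubgroup_iff_of_mul_closed, pow_one]
  rw [pow_one]
  exact fun x y ↦ hreg.mul_pow_eq_one hP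

theorem inv_mul_pow_eq_one (hreg : IsRegularPGroup p P) (hP : IsPGroup p P) {x y : P}
    (hxy : x ^ p = y ^ p) : (x⁻¹ * y) ^ p = 1 := by
  induction hn : Nat.card P using Nat.strong_induction_on generalizing P with | _ n ih
  have := hP.isNilpotent
  by_cases htop : Subgroup.zpowers x = ⊤
  · rw [(commute_of_zpowers_eq_top htop y).inv_left.mul_pow, inv_pow, hxy, inv_mul_cancel]
  obtain ⟨M, hMn, hMcard, hxM⟩ := exists_normal_card_lt_mem htop
  have conj_pow_eq : (y * x * y⁻¹) ^ p = x ^ p := by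
    rw [conj_pow, hxy, ← pow_succ', pow_succ, mul_inv_cancel_right]
  have commutator_pow : ⁅x⁻¹, y⁆ ^ p = 1 := by
    have h := ih _ (hn ▸ hMcard) (hreg.to_subgroup M) (hP.to_subgroup M) (x := ⟨x, hxM⟩)
      (y := ⟨y * x * y⁻¹, hMn.conj_mem x hxM y⟩) (Subtype.ext conj_pow_eq.symm) rfl
    simpa [commutatorElement_def, mul_assoc] using congrArg M.subtype h
  rw [hreg.mul_pow_of_commutatorElement_mem (fun _ ↦ (hreg.mem_omegaSubgroup_one hP).1)
    ((hreg.mem_omegaSubgroup_one hP).2 commutator_pow), inv_pow, hxy, inv_mul_cancel]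

theorem pow_prime_eq_pow_prime_iff (hreg : IsRegularPGroup p P) (hP : IsPGroup p P) {x y : P} :
    x ^ p = y ^ p ↔ (x⁻¹ * y) ^ p = 1 := by
  refine ⟨hreg.inv_mul_pow_eq_one hP, fun h ↦ ?_⟩
  have hxy : ⁅x, x⁻¹ * y⁆ ∈ OmegaSubgroup p P 1 := by
    rw [← commutatorElement_inv, inv_mem_iff]
    exact commutatorElement_mem_of_left_mem ((hreg.mem_omegaSubgroup_one hP).2 h) x
  have mul_pow := hreg.mul_pow_of_commutatorElement_mem
    (fun _ ↦ (hreg.mem_omegaSubgroup_one hP).1) hxy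
  rw [mul_inv_cancel_left, h, mul_one] at mul_pow
  exact mul_pow.symm

theorem pow_eq_pow_iff (hreg : IsRegularPGroup p P) (hP : IsPGroup p P) {i : ℕ} {x y : P} :
    x ^ p ^ i = y ^ p ^ i ↔ (x⁻¹ * y) ^ p ^ i = 1 := by
  induction i generalizing P with
  | zero => rw [pow_zero, pow_one, pow_one, pow_one, inv_mul_eq_one]
  | succ i ih =>
    let Ω := OmegaSubgroup p P 1
    have mem_Ω {z : P} : z ^ p = 1 ↔ (z : P ⧸ Ω) = 1 := by
      rw [QuotientGroup.eq_one_iff, hreg.mem_omegaSubgroup_one hP]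
    have ih_quotient := ih (hreg.to_quotient Ω) (hP.to_quotient Ω) (x := x) (y := y)
    simp only [pow_succ, pow_mul]
    rw [hreg.pow_prime_eq_pow_prime_iff hP, mem_Ω, mem_Ω]
    simpa only [QuotientGroup.mk_mul, QuotientGroup.mk_inv, QuotientGroup.mk_pow,
      inv_mul_eq_one] using ih_quotient

theorem mem_omegaSubgroup (hreg : IsRegularPGroup p P) (hP : IsPGroup p P) {i : ℕ} {x : P} :
    x ∈ OmegaSubgroup p P i ↔ x ^ p ^ i = 1 := by
  refine mem_omegaSubgroup_iff_of_mul_closed fun a b ha hb ↦ ?_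
  rw [← inv_inv a, ← hreg.pow_eq_pow_iff hP, inv_pow, ha, hb, inv_one]

theorem commute_pow_left_iff (hreg : IsRegularPGroup p P) (hP : IsPGroup p P) {i : ℕ} {x y : P} :
    Commute (x ^ p ^ i) y ↔ Commute x (y ^ p ^ i) := by
  have commute_pow_iff (a b : P) : Commute (a ^ p ^ i) b ↔ (a⁻¹ * (b * a * b⁻¹)) ^ p ^ i = 1 := by
    rw [← hreg.pow_eq_pow_iff hP, conj_pow, commute_iff_eq, eq_mul_inv_iff_mul_eq]
  have conj : y⁻¹ * (x * y * x⁻¹) = (y⁻¹ * x) * (x⁻¹ * (y * x * y⁻¹))⁻¹ * (y⁻¹ * x)⁻¹ := by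
    group
  rw [Commute.symm_iff (a := x), commute_pow_iff, commute_pow_iff, conj, conj_pow, inv_pow,
    conj_eq_one_iff, inv_eq_one]

theorem relIndex_omegaSubgroup (hreg : IsRegularPGroup p P) (hP : IsPGroup p P) (i : ℕ)
    (K : Subgroup P) :
    (OmegaSubgroup p P i).relIndex K = Nat.card ((· ^ p ^ i) '' (K : Set P)) :=
  relIndex_eq_card_image
    (fun _ _ ↦ by rw [hreg.mem_omegaSubgroup hP, hreg.pow_eq_pow_iff hP]) K

theorem index_omegaSubgroup (hreg : IsRegularPGroup p P) (hP : IsPGroup p P) (i : ℕ) :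
    (OmegaSubgroup p P i).index = Nat.card (Set.range fun x : P ↦ x ^ p ^ i) := by
  rw [← Subgroup.relIndex_top_right, hreg.relIndex_omegaSubgroup hP, Subgroup.coe_top,
    Set.image_univ]

end PowerStructure

section TypeInvariants

variable {p : ℕ} [Fact p.Prime] {P : Type} [Group P] [Finite P]

theorem omegaInv_succ_antitone (hreg : IsRegularPGroup p P) (hP : IsPGroup p P) :
    Antitone fun i ↦ omegaInv p P (i + 1) := by
  refine antitone_nat_of_succ_le fun i ↦ ?_
  have hp : p.Prime := Fact.out
  rw [← Nat.pow_le_pow_iff_right hp.one_lt, ← relIndex_omegaSubgroup_succ hP,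
    ← relIndex_omegaSubgroup_succ hP, hreg.relIndex_omegaSubgroup hP,
    hreg.relIndex_omegaSubgroup hP]
  refine Nat.card_mono (Set.toFinite _) ?_
  rintro _ ⟨x, hx, rfl⟩
  have pow_pow_succ (k : ℕ) : (x ^ p) ^ p ^ k = x ^ p ^ (k + 1) := by rw [← pow_mul, ← pow_succ']
  refine ⟨x ^ p, (hreg.mem_omegaSubgroup hP).2 ?_, pow_pow_succ i⟩
  rw [pow_pow_succ, (hreg.mem_omegaSubgroup hP).1 hx]

theorem le_muInv_iff (hreg : IsRegularPGroup p P) (hP : IsPGroup p P) {i j : ℕ} (hi : 1 ≤ i)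
    (hj : 1 ≤ j) : i ≤ muInv p P j ↔ j ≤ omegaInv p P i := by
  obtain ⟨e, he⟩ := isPGroup_iff_exponent_eq_pow.1 hP
  refine le_card_subtype_iff_of_antitone (hreg.omegaInv_succ_antitone hP) ⟨e, ?_⟩ hi
  rwa [omegaInv_eq_zero_of_exponent_dvd he.dvd e.lt_succ_self]

theorem muInv_anti (hreg : IsRegularPGroup p P) (hP : IsPGroup p P) {j k : ℕ} (hj : 1 ≤ j)
    (hjk : j ≤ k) : muInv p P k ≤ muInv p P j := by
  rcases Nat.eq_zero_or_pos (muInv p P k) with hzero | hpos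
  · exact hzero ▸ Nat.zero_le _
  · exact (hreg.le_muInv_iff hP hpos hj).2
      (hjk.trans ((hreg.le_muInv_iff hP hpos (hj.trans hjk)).1 le_rfl))

theorem omegaSubgroup_eq_top_iff (hreg : IsRegularPGroup p P) (hP : IsPGroup p P) {i : ℕ} :
    OmegaSubgroup p P i = ⊤ ↔ Monoid.exponent P ∣ p ^ i := by
  simp only [Subgroup.eq_top_iff', hreg.mem_omegaSubgroup hP,
    Monoid.exponent_dvd_iff_forall_pow_eq_one]

theorem exponent_eq_pow_muInv_one (hreg : IsRegularPGroup p P) (hP : IsPGroup p P) :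
    Monoid.exponent P = p ^ muInv p P 1 := by
  have hp : p.Prime := Fact.out
  obtain ⟨e, he⟩ := isPGroup_iff_exponent_eq_pow.1 hP
  have muInv_le : muInv p P 1 ≤ e := by
    by_contra! hlt
    have h := (hreg.le_muInv_iff hP (Nat.succ_le_of_lt e.succ_pos) le_rfl).1 hlt
    rw [omegaInv_eq_zero_of_exponent_dvd he.dvd e.lt_succ_self] at h
    exact Nat.not_succ_le_zero 0 h
  have le_muInv : e ≤ muInv p P 1 := by
    by_contra! hlt
    obtain ⟨k, rfl⟩ := Nat.exists_eq_succ_of_ne_zero (Nat.ne_zero_of_lt hlt)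
    have omega_eq_zero : omegaInv p P (k + 1) = 0 := by
      by_contra hne
      exact hlt.not_ge ((hreg.le_muInv_iff hP k.succ_pos le_rfl).2 (Nat.pos_of_ne_zero hne))
    have h := relIndex_omegaSubgroup_succ hP k
    rw [omegaSubgroup_eq_top_of_exponent_dvd he.dvd, Subgroup.relIndex_top_right, omega_eq_zero,
      pow_zero, Subgroup.index_eq_one, hreg.omegaSubgroup_eq_top_iff hP, he] at h
    exact Nat.not_succ_le_self k ((Nat.pow_dvd_pow_iff_le_right hp.one_lt).1 h)
  rw [he, le_antisymm muInv_le le_muInv]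

theorem index_omegaSubgroup_muInv_two (hreg : IsRegularPGroup p P) (hP : IsPGroup p P) :
    (OmegaSubgroup p P (muInv p P 2)).index = p ^ (muInv p P 1 - muInv p P 2) := by
  have hle : muInv p P 2 ≤ muInv p P 1 := hreg.muInv_anti hP le_rfl one_le_two
  have omega_eq_one (i : ℕ) (hi : i < muInv p P 1 - muInv p P 2) :
      omegaInv p P (muInv p P 2 + i + 1) = 1 := by
    have le_muInv_iff {j : ℕ} (hj : 1 ≤ j) :
        muInv p P 2 + i + 1 ≤ muInv p P j ↔ j ≤ omegaInv p P (muInv p P 2 + i + 1) :=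
      hreg.le_muInv_iff hP (Nat.succ_pos _) hj
    have one_le := (le_muInv_iff le_rfl).1
    have two_le := (le_muInv_iff one_le_two).2
    omega
  have h := relIndex_omegaSubgroup_add hP (muInv p P 2) (muInv p P 1 - muInv p P 2)
  rwa [Nat.add_sub_cancel' hle,
    omegaSubgroup_eq_top_of_exponent_dvd (hreg.exponent_eq_pow_muInv_one hP).dvd,
    Subgroup.relIndex_top_right, Finset.sum_congr rfl fun i hi ↦ omega_eq_one i (by simpa using hi),
    Finset.sum_const, Finset.card_range, smul_eq_mul, mul_one] at h

end TypeInvariants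

section Quotient

variable {p : ℕ} [Fact p.Prime] {P : Type} [Group P] [Finite P] {N : Subgroup P} [N.Normal]

theorem card_omegaSubgroup_quotient (hreg : IsRegularPGroup p P) (hP : IsPGroup p P) {i : ℕ}
    (hN : ∀ z ∈ N, ∃ x : P, x ^ p ^ i = z) :
    Nat.card (OmegaSubgroup p (P ⧸ N) i) = Nat.card (OmegaSubgroup p P i) := by
  let K := (OmegaSubgroup p (P ⧸ N) i).comap (QuotientGroup.mk' N)
  have mem_K (x : P) : x ∈ K ↔ x ^ p ^ i ∈ N := by
    rw [Subgroup.mem_comap, (hreg.to_quotient N).mem_omegaSubgroup (hP.to_quotient N), ← map_pow,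
      QuotientGroup.mk'_apply, QuotientGroup.eq_one_iff]
  have hNK : N ≤ K := fun x hx ↦ (mem_K x).2 (N.pow_mem hx _)
  have hΩK : OmegaSubgroup p P i ≤ K := fun x hx ↦
    (mem_K x).2 ((hreg.mem_omegaSubgroup hP).1 hx ▸ N.one_mem)
  have relIndex_N : N.relIndex K = Nat.card (OmegaSubgroup p (P ⧸ N) i) := by
    rw [← Subgroup.map_comap_eq_self_of_surjective (QuotientGroup.mk'_surjective N)
      (OmegaSubgroup p (P ⧸ N) i), ← Subgroup.relIndex_ker, QuotientGroup.ker_mk']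
  have relIndex_Ω : (OmegaSubgroup p P i).relIndex K = Nat.card N := by
    have image_eq : (· ^ p ^ i) '' (K : Set P) = N := by
      ext z
      refine ⟨?_, fun hz ↦ ?_⟩
      · rintro ⟨x, hx, rfl⟩
        exact (mem_K x).1 hx
      · obtain ⟨x, rfl⟩ := hN z hz
        exact ⟨x, (mem_K x).2 hz, rfl⟩
    rw [hreg.relIndex_omegaSubgroup hP, image_eq]
    rfl
  apply Nat.eq_of_mul_eq_mul_right (Nat.card_pos (α := N))
  rw [← relIndex_N, relIndex_mul_card hNK, mul_comm, ← relIndex_Ω, relIndex_mul_card hΩK]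

theorem omegaInv_quotient (hreg : IsRegularPGroup p P) (hP : IsPGroup p P) {m : ℕ}
    (hN : (N : Set P) = Set.range (· ^ p ^ m)) {i : ℕ} (him : i ≤ m) :
    omegaInv p (P ⧸ N) i = omegaInv p P i := by
  have card_eq {k : ℕ} (hkm : k ≤ m) :
      Nat.card (OmegaSubgroup p (P ⧸ N) k) = Nat.card (OmegaSubgroup p P k) := by
    refine hreg.card_omegaSubgroup_quotient hP fun z hz ↦ ?_
    obtain ⟨x, rfl⟩ : z ∈ Set.range (· ^ p ^ m) := hN ▸ hz
    exact ⟨x ^ p ^ (m - k), by rw [← pow_mul, ← pow_add, Nat.sub_add_cancel hkm]⟩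
  rw [omegaInv_eq_factorization_card_div, omegaInv_eq_factorization_card_div, card_eq him,
    card_eq ((Nat.sub_le i 1).trans him)]

theorem muInv_quotient (hreg : IsRegularPGroup p P) (hP : IsPGroup p P) {m : ℕ}
    (hN : (N : Set P) = Set.range (· ^ p ^ m)) {j : ℕ} (hj : 1 ≤ j) :
    muInv p (P ⧸ N) j = min m (muInv p P j) := by
  have exponent_dvd : Monoid.exponent (P ⧸ N) ∣ p ^ m := by
    refine Monoid.exponent_dvd_of_forall_pow_eq_one fun x ↦ ?_
    obtain ⟨x, rfl⟩ := QuotientGroup.mk_surjective x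
    rw [← QuotientGroup.mk_pow, QuotientGroup.eq_one_iff, ← SetLike.mem_coe, hN]
    exact ⟨x, rfl⟩
  have le_iff {i : ℕ} (hi : 1 ≤ i) : i ≤ muInv p (P ⧸ N) j ↔ i ≤ min m (muInv p P j) := by
    rw [(hreg.to_quotient N).le_muInv_iff (hP.to_quotient N) hi hj, le_min_iff,
      hreg.le_muInv_iff hP hi hj]
    rcases le_or_gt i m with him | hmi
    · rw [hreg.omegaInv_quotient hP hN him, and_iff_right him]
    · rw [omegaInv_eq_zero_of_exponent_dvd exponent_dvd hmi]
      omega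
  refine eq_of_forall_le_iff fun i ↦ ?_
  rcases Nat.eq_zero_or_pos i with rfl | hi
  · exact iff_of_true (Nat.zero_le _) (Nat.zero_le _)
  · exact le_iff hi

end Quotient

section MaximalOrder

variable {p : ℕ} [Fact p.Prime] {P : Type} [Group P] [Finite P] {g : P}

theorem card_zpowers_pow_muInv_two (hreg : IsRegularPGroup p P) (hP : IsPGroup p P)
    (hg : orderOf g = Monoid.exponent P) :
    Nat.card (Subgroup.zpowers (g ^ p ^ muInv p P 2)) = p ^ (muInv p P 1 - muInv p P 2) := by
  have hp : p.Prime := Fact.out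
  have hle : muInv p P 2 ≤ muInv p P 1 := hreg.muInv_anti hP le_rfl one_le_two
  rw [Nat.card_zpowers, orderOf_pow, hg, hreg.exponent_eq_pow_muInv_one hP,
    Nat.gcd_eq_right (pow_dvd_pow p hle), Nat.pow_div hle hp.pos]

theorem coe_zpowers_pow_muInv_two (hreg : IsRegularPGroup p P) (hP : IsPGroup p P)
    (hg : orderOf g = Monoid.exponent P) :
    (Subgroup.zpowers (g ^ p ^ muInv p P 2) : Set P) = Set.range (· ^ p ^ muInv p P 2) := by
  refine Set.Finite.eq_of_subset_of_card_le (Set.toFinite _) ?_ ?_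
  · rintro _ ⟨k, rfl⟩
    exact ⟨g ^ k, by simp only [← zpow_natCast, ← zpow_mul, mul_comm]⟩
  · rw [← hreg.index_omegaSubgroup hP, hreg.index_omegaSubgroup_muInv_two hP]
    exact (hreg.card_zpowers_pow_muInv_two hP hg).ge

theorem pow_muInv_two_mem_center (hreg : IsRegularPGroup p P) (hP : IsPGroup p P)
    (hg : orderOf g = Monoid.exponent P) : g ^ p ^ muInv p P 2 ∈ Subgroup.center P := by
  refine Subgroup.mem_center_iff.2 fun y ↦ ((hreg.commute_pow_left_iff hP).2 ?_).symm
  obtain ⟨k, hk⟩ : y ^ p ^ muInv p P 2 ∈ (Subgroup.zpowers (g ^ p ^ muInv p P 2) : Set P) := by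
    rw [hreg.coe_zpowers_pow_muInv_two hP hg]
    exact ⟨y, rfl⟩
  rw [← hk]
  exact ((Commute.refl g).pow_right _).zpow_right k

end MaximalOrder

end IsRegularPGroup

theorem quotient_by_power_of_first_basis_element_general
    {p n e : ℕ} (hp : p.Prime) {P : Type} [Group P]
    (hcard : Nat.card P = p ^ n) (hexp : Monoid.exponent P = p ^ e)
    (hreg : IsRegularPGroup p P) {g : P} (hg : orderOf g = Monoid.exponent P) :
    g ^ p ^ muInv p P 2 ∈ Subgroup.center P ∧
      ∀ hN : (Subgroup.zpowers (g ^ p ^ muInv p P 2)).Normal,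
        letI := hN
        IsRegularPGroup p (P ⧸ Subgroup.zpowers (g ^ p ^ muInv p P 2)) ∧
        Nat.card (P ⧸ Subgroup.zpowers (g ^ p ^ muInv p P 2)) =
          Nat.card P / p ^ (muInv p P 1 - muInv p P 2) ∧
        Monoid.exponent (P ⧸ Subgroup.zpowers (g ^ p ^ muInv p P 2)) = p ^ muInv p P 2 ∧
        muInv p (P ⧸ Subgroup.zpowers (g ^ p ^ muInv p P 2)) 1 = muInv p P 2 ∧
        (∀ j : ℕ, 2 ≤ j →
          muInv p (P ⧸ Subgroup.zpowers (g ^ p ^ muInv p P 2)) j = muInv p P j) ∧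
        (∃ n' e' : ℕ,
          Nat.card (P ⧸ Subgroup.zpowers (g ^ p ^ muInv p P 2)) = p ^ n' ∧
          Monoid.exponent (P ⧸ Subgroup.zpowers (g ^ p ^ muInv p P 2)) = p ^ e' ∧
          n' - e' = n - e) := by
  have := Fact.mk hp
  have : Finite P := Nat.finite_of_card_ne_zero (hcard ▸ (pow_pos hp.pos n).ne')
  have hP : IsPGroup p P := .of_card hcard
  refine ⟨hreg.pow_muInv_two_mem_center hP hg, fun hN ↦ ?_⟩
  have he : e = muInv p P 1 :=
    Nat.pow_right_injective hp.two_le (hexp.symm.trans (hreg.exponent_eq_pow_muInv_one hP))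
  have hen : e ≤ n := (Nat.pow_dvd_pow_iff_le_right hp.one_lt).1
    (hexp ▸ hcard ▸ Group.exponent_dvd_nat_card)
  have muInv_anti {j : ℕ} (hj : 1 ≤ j) {k : ℕ} := hreg.muInv_anti hP (k := k) hj
  set N := Subgroup.zpowers (g ^ p ^ muInv p P 2)
  have muInv_quotient {j : ℕ} (hj : 1 ≤ j) : muInv p (P ⧸ N) j = min (muInv p P 2) (muInv p P j) :=
    hreg.muInv_quotient hP (hreg.coe_zpowers_pow_muInv_two hP hg) hj
  have muInv_one : muInv p (P ⧸ N) 1 = muInv p P 2 := by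
    rw [muInv_quotient le_rfl, min_eq_left (muInv_anti le_rfl one_le_two)]
  have card_eq : Nat.card (P ⧸ N) = Nat.card P / p ^ (muInv p P 1 - muInv p P 2) := by
    rw [← hreg.card_zpowers_pow_muInv_two hP hg]
    exact Nat.eq_div_of_mul_eq_left Nat.card_pos.ne' N.index_mul_card
  have exponent_eq : Monoid.exponent (P ⧸ N) = p ^ muInv p P 2 := by
    rw [(hreg.to_quotient N).exponent_eq_pow_muInv_one (hP.to_quotient N), muInv_one]
  refine ⟨hreg.to_quotient N, card_eq, exponent_eq, muInv_one, fun j hj ↦ ?_,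
    n - (muInv p P 1 - muInv p P 2), muInv p P 2, ?_, exponent_eq, ?_⟩
  · rw [muInv_quotient (by omega), min_eq_right (muInv_anti one_le_two hj)]
  · rw [card_eq, hcard, Nat.pow_div (by omega) hp.pos]
  · have := muInv_anti le_rfl one_le_two
    omega

/-- Let `P` be a finite regular `p`-group with `ω_1(P) ≥ 2`, and let
`(g_1, ..., g_{ω_1(P)})` be a uniqueness basis with `orderOf (g_i) = p ^ μ_i(P)`.
Then `g' = g_1 ^ (p ^ μ_2(P))` is central, and the quotient `P/⟨g'⟩` is a regular `p`-group
of order `|P| / p ^ (μ_1(P) - μ_2(P))`, exponent `p ^ μ_2(P)`, with type invariants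
`(μ_2(P), μ_2(P), μ_3(P), ..., μ_{ω_1(P)}(P))`, and the same coexponent as `P`. -/
theorem quotient_by_power_of_first_basis_element
    (p n e : ℕ) (hp : p.Prime) (P : Type) [Group P] [Finite P]
    (hcard : Nat.card P = p ^ n) (hexp : Monoid.exponent P = p ^ e)
    (hreg : IsRegularPGroup p P)
    (hω : 2 ≤ omegaInv p P 1)
    (g : Fin (omegaInv p P 1) → P)
    (hbasis : IsUniquenessBasis g)
    (hord : ∀ i, orderOf (g i) = p ^ muInv p P (i.val + 1)) :
    g ⟨0, by omega⟩ ^ p ^ muInv p P 2 ∈ Subgroup.center P ∧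
      ∀ hN : (Subgroup.zpowers (g ⟨0, by omega⟩ ^ p ^ muInv p P 2)).Normal,
        letI := hN
        IsRegularPGroup p (P ⧸ Subgroup.zpowers (g ⟨0, by omega⟩ ^ p ^ muInv p P 2)) ∧
        Nat.card (P ⧸ Subgroup.zpowers (g ⟨0, by omega⟩ ^ p ^ muInv p P 2)) =
          Nat.card P / p ^ (muInv p P 1 - muInv p P 2) ∧
        Monoid.exponent (P ⧸ Subgroup.zpowers (g ⟨0, by omega⟩ ^ p ^ muInv p P 2)) =
          p ^ muInv p P 2 ∧
        muInv p (P ⧸ Subgroup.zpowers (g ⟨0, by omega⟩ ^ p ^ muInv p P 2)) 1 = muInv p P 2 ∧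
        (∀ j : ℕ, 2 ≤ j →
          muInv p (P ⧸ Subgroup.zpowers (g ⟨0, by omega⟩ ^ p ^ muInv p P 2)) j = muInv p P j) ∧
        (∃ n' e' : ℕ,
          Nat.card (P ⧸ Subgroup.zpowers (g ⟨0, by omega⟩ ^ p ^ muInv p P 2)) = p ^ n' ∧
          Monoid.exponent (P ⧸ Subgroup.zpowers (g ⟨0, by omega⟩ ^ p ^ muInv p P 2)) = p ^ e' ∧
          n' - e' = n - e) :=
  have := Fact.mk hp
  quotient_by_power_of_first_basis_element_general hp hcard hexp hreg <|
    (hord _).trans (hreg.exponent_eq_pow_muInv_one (.of_card hcard)).symm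
end
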